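/- arXiv:1612.03372 — 4 statements merged into one kernel-verified Lean document; each statement's English description precedes it below -/
import Mathlib

section
/- Let n ≥ 3 and 1 ≤ k < n/2, let L be the Laplacian matrix of the generalized Petersen graph GP(n,k), viewed as a ℤ-linear map ℤ^{2n} → ℤ^{2n}, and let 𝒜 be the (2k+2)×(2k+2) companion matrix of the polynomial Q_k. Then there is an isomorphism of abelian groups coker L ≅ coker(𝒜^n − I), where I is the identity matrix of size 2k+2. -/
open Polynomial

def gpRel (n k : ℕ) : (ZMod n ⊕ ZMod n) → (ZMod n ⊕ ZMod n) → Prop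
  | Sum.inl i, Sum.inl j => j = i + 1
  | Sum.inl i, Sum.inr j => j = i
  | Sum.inr _, Sum.inl _ => False
  | Sum.inr i, Sum.inr j => j = i + (k : ZMod n)

instance (n k : ℕ) : DecidableRel (gpRel n k) := fun a b =>
  match a, b with
  | Sum.inl i, Sum.inl j => inferInstanceAs (Decidable (j = i + 1))
  | Sum.inl i, Sum.inr j => inferInstanceAs (Decidable (j = i))
  | Sum.inr _, Sum.inl _ => inferInstanceAs (Decidable False)
  | Sum.inr i, Sum.inr j => inferInstanceAs (Decidable (j = i + (k : ZMod n)))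

/-- The generalized Petersen graph `GP(n,k)`; `Sum.inl i` is the outer vertex `u_i`,
`Sum.inr i` the inner vertex `v_i`, and the edges are `u_i u_{i+1}`, `u_i v_i`,
`v_i v_{i+k}` (indices mod `n`). -/
def genPetersen (n k : ℕ) : SimpleGraph (ZMod n ⊕ ZMod n) :=
  SimpleGraph.fromRel (gpRel n k)

instance (n k : ℕ) : DecidableRel (genPetersen n k).Adj := fun a b =>
  inferInstanceAs (Decidable (a ≠ b ∧ (gpRel n k a b ∨ gpRel n k b a)))

/-- The monic integer polynomial `Q_k(z) = z^{k+1}·((3 − z − z⁻¹)(3 − z^k − z^{−k}) − 1)`,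
written out as
`Q_k(z) = 1 − 3z + z² − 3z^k + 8z^{k+1} − 3z^{k+2} + z^{2k} − 3z^{2k+1} + z^{2k+2}`. -/
noncomputable def gpCharPoly (k : ℕ) : Polynomial ℤ :=
  1 - 3 * X + X ^ 2 - 3 * X ^ k + 8 * X ^ (k + 1) - 3 * X ^ (k + 2)
    + X ^ (2 * k) - 3 * X ^ (2 * k + 1) + X ^ (2 * k + 2)

/-- The `(2k+2) × (2k+2)` companion matrix `𝒜` of `Q_k`: the first `2k+1` rows form
the block `(0 | I_{2k+1})` and the last row is `(−1, −a_1, …, −a_{2k+1})`, where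
`Q_k(z) = 1 + a_1 z + ⋯ + a_{2k+1} z^{2k+1} + z^{2k+2}`. -/
noncomputable def gpCompanion (k : ℕ) : Matrix (Fin (2 * k + 2)) (Fin (2 * k + 2)) ℤ :=
  fun i j =>
    if (i : ℕ) = 2 * k + 1 then -(gpCharPoly k).coeff (j : ℕ)
    else if (j : ℕ) = (i : ℕ) + 1 then 1 else 0


/-! ### Cyclic modules over `ℤ[X]` -/

theorem cyc_ker {M : Type} [AddCommGroup M] [Module.Free ℤ M] [Module.Finite ℤ M]
    (T : Module.End ℤ M) (m : M) (g : ℤ[X]) (hg : g.Monic)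
    (hs : ∀ y : M, ∃ p : ℤ[X], aeval T p m = y) (h0 : aeval T g m = 0)
    (hd : Module.finrank ℤ M = g.natDegree) (p : ℤ[X]) (hp : aeval T p m = 0) :
    ∃ b, p = b * g := by
  have hmod : ∀ p : ℤ[X], aeval T (p %ₘ g) m = aeval T p m := by
    intro p
    conv_rhs => rw [← modByMonic_add_div p g, mul_comm g]
    simp [h0]
  let F : degreeLT ℤ g.natDegree →ₗ[ℤ] M :=
    ((LinearMap.applyₗ m).comp (aeval T).toLinearMap).comp (degreeLT ℤ g.natDegree).subtype
  have hF : ∀ x, F x = aeval T (x : ℤ[X]) m := fun x => rfl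
  have hmem : ∀ p : ℤ[X], p %ₘ g ∈ degreeLT ℤ g.natDegree := by
    intro p
    rw [mem_degreeLT, ← degree_eq_natDegree hg.ne_zero]
    exact degree_modByMonic_lt p hg
  have hFs : Function.Surjective F := by
    intro y
    obtain ⟨p, rfl⟩ := hs y
    exact ⟨⟨p %ₘ g, hmem p⟩, by rw [hF]; exact hmod p⟩
  have hfr : Module.finrank ℤ (degreeLT ℤ g.natDegree) = g.natDegree := by
    rw [LinearEquiv.finrank_eq (degreeLTEquiv ℤ g.natDegree)]; simp
  haveI : Module.Finite ℤ (degreeLT ℤ g.natDegree) :=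
    Module.Finite.equiv (degreeLTEquiv ℤ g.natDegree).symm
  haveI : Module.Free ℤ (degreeLT ℤ g.natDegree) :=
    Module.Free.of_equiv (degreeLTEquiv ℤ g.natDegree).symm
  have hb := OrzechProperty.bijective_of_surjective_of_finrank_le F hFs (by rw [hfr, hd])
  have hz : (⟨p %ₘ g, hmem p⟩ : degreeLT ℤ g.natDegree) = 0 := by
    apply hb.1
    rw [hF, map_zero]
    exact (hmod p).trans hp
  have hz' : p %ₘ g = 0 := congrArg Subtype.val hz
  obtain ⟨c, hc⟩ := (modByMonic_eq_zero_iff_dvd hg).1 hz'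
  exact ⟨c, by rw [hc, mul_comm]⟩

theorem cyc_mem {M : Type} [AddCommGroup M] [Module.Free ℤ M] [Module.Finite ℤ M]
    (T : Module.End ℤ M) (m : M) (g : ℤ[X]) (hg : g.Monic)
    (hs : ∀ y : M, ∃ p : ℤ[X], aeval T p m = y) (h0 : aeval T g m = 0)
    (hd : Module.finrank ℤ M = g.natDegree) (q p : ℤ[X]) :
    (∃ y, aeval T q y = aeval T p m) ↔ ∃ a b, p = a * q + b * g := by
  constructor
  · rintro ⟨y, hy⟩
    obtain ⟨r, rfl⟩ := hs y
    obtain ⟨b, hb⟩ := cyc_ker T m g hg hs h0 hd (p - r * q) (by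
      rw [map_sub, LinearMap.sub_apply, ← hy, mul_comm, map_mul, Module.End.mul_apply, sub_self])
    exact ⟨r, b, by rw [← hb]; ring⟩
  · rintro ⟨a, b, rfl⟩
    refine ⟨aeval T a m, ?_⟩
    rw [map_add, LinearMap.add_apply, map_mul (aeval T) b, Module.End.mul_apply, h0, map_zero,
      add_zero, mul_comm, map_mul, Module.End.mul_apply]

theorem equiv_of_ker {P A B : Type} [AddCommGroup P] [AddCommGroup A] [AddCommGroup B]
    (f : P →ₗ[ℤ] A) (g : P →ₗ[ℤ] B) (hf : Function.Surjective f) (hg : Function.Surjective g)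
    (h : ∀ p, f p = 0 ↔ g p = 0) : Nonempty (A ≃+ B) := by
  have hk : LinearMap.ker f = LinearMap.ker g := by
    ext p; exact h p
  exact ⟨((f.quotKerEquivOfSurjective hf).symm.trans
    ((Submodule.quotEquivOfEq _ _ hk).trans (g.quotKerEquivOfSurjective hg))).toAddEquiv⟩

/-! ### The polynomial `Q_k` -/

theorem gp_monic_deg (k : ℕ) (hk : 1 ≤ k) :
    (gpCharPoly k).Monic ∧ (gpCharPoly k).natDegree = 2 * k + 2 := by
  have h1 : (gpCharPoly k).natDegree ≤ 2 * k + 2 := by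
    unfold gpCharPoly
    compute_degree
    omega
  have h2 : (gpCharPoly k).coeff (2 * k + 2) = 1 := by
    have e3 : (3 : ℤ[X]) = C 3 := rfl
    have e8 : (8 : ℤ[X]) = C 8 := rfl
    unfold gpCharPoly
    rw [e3, e8]
    simp only [coeff_add, coeff_sub, coeff_C_mul, coeff_X_pow, coeff_one, coeff_X]
    grind
  have h3 : (gpCharPoly k).natDegree = 2 * k + 2 :=
    natDegree_eq_of_le_of_coeff_ne_zero h1 (by rw [h2]; norm_num)
  exact ⟨by rw [Monic, leadingCoeff, h3, h2], h3⟩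

/-! ### The companion matrix -/

theorem coeff_divX_iter (Q : ℤ[X]) (i j : ℕ) : (divX^[i] Q).coeff j = Q.coeff (j + i) := by
  induction i generalizing j with
  | zero => rfl
  | succ i ih => rw [Function.iterate_succ_apply', coeff_divX, ih]; congr 1; omega

/-- The last basis vector. -/
def lastVec (k : ℕ) : Fin (2 * k + 2) → ℤ := Pi.single (Fin.last (2 * k + 1)) 1

theorem comp_single_zero (k : ℕ) :
    (gpCompanion k).mulVecLin (Pi.single 0 1) = -((gpCharPoly k).coeff 0 • lastVec k) := by
  ext i
  simp only [Matrix.mulVecLin_apply, Matrix.mulVec_single_one, Matrix.col_apply, gpCompanion,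
    lastVec, Pi.neg_apply, Pi.smul_apply, Pi.single_apply, Fin.ext_iff, Fin.val_last]
  split_ifs <;> simp_all

theorem comp_single_succ (k j : ℕ) (hj : j + 1 < 2 * k + 2) :
    (gpCompanion k).mulVecLin (Pi.single ⟨j + 1, hj⟩ 1) =
      Pi.single ⟨j, by omega⟩ 1 - (gpCharPoly k).coeff (j + 1) • lastVec k := by
  ext i
  simp only [Matrix.mulVecLin_apply, Matrix.mulVec_single_one, Matrix.col_apply, gpCompanion,
    lastVec, Pi.sub_apply, Pi.smul_apply, Pi.single_apply, Fin.ext_iff, Fin.val_last,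
    smul_eq_mul]
  grind

theorem comp_basis (k : ℕ) (hk : 1 ≤ k) (t j : ℕ) (hj : j + t = 2 * k + 1) :
    aeval (gpCompanion k).mulVecLin (divX^[j + 1] (gpCharPoly k)) (lastVec k) =
      Pi.single ⟨j, by omega⟩ 1 := by
  obtain ⟨hm, hd⟩ := gp_monic_deg k hk
  induction t generalizing j with
  | zero =>
    have h1 : divX^[j + 1] (gpCharPoly k) = 1 := by
      ext i
      rw [coeff_divX_iter, coeff_one]
      rcases Nat.eq_zero_or_pos i with rfl | hi
      · have e : 0 + (j + 1) = (gpCharPoly k).natDegree := by omega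
        rw [e, hm.coeff_natDegree]; simp
      · rw [if_neg (by omega), coeff_eq_zero_of_natDegree_lt]
        omega
    rw [h1, map_one, Module.End.one_apply, lastVec]
    congr 1
    ext
    simp; omega
  | succ t ih =>
    have h1 := X_mul_divX_add (divX^[j + 1] (gpCharPoly k))
    rw [← Function.iterate_succ_apply' divX, coeff_divX_iter, zero_add] at h1
    rw [← h1, map_add, map_mul, aeval_X, aeval_C, LinearMap.add_apply, Module.End.mul_apply,
      ih (j + 1) (by omega), comp_single_succ]
    simp

theorem comp_kill (k : ℕ) (hk : 1 ≤ k) :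
    aeval (gpCompanion k).mulVecLin (gpCharPoly k) (lastVec k) = 0 := by
  have h1 := X_mul_divX_add (gpCharPoly k)
  have h2 := comp_basis k hk (2 * k + 1) 0 (by omega)
  rw [Function.iterate_one] at h2
  rw [← h1, map_add, map_mul, aeval_X, aeval_C, LinearMap.add_apply, Module.End.mul_apply, h2]
  have h3 := comp_single_zero k
  rw [show (⟨0, by omega⟩ : Fin (2 * k + 2)) = 0 from rfl, h3]
  simp

theorem cyc_surj {M ι : Type} [AddCommGroup M] [Fintype ι] [DecidableEq ι]
    (T : Module.End ℤ (ι → ℤ)) (m : ι → ℤ)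
    (h : ∀ i, ∃ p : ℤ[X], aeval T p m = Pi.single i 1) (y : ι → ℤ) :
    ∃ p : ℤ[X], aeval T p m = y := by
  choose p hp using h
  refine ⟨∑ i, y i • p i, ?_⟩
  rw [map_sum, LinearMap.sum_apply]
  simp only [map_smul, LinearMap.smul_apply, hp]
  ext j
  simp [Finset.sum_apply, Pi.single_apply]

theorem comp_surj (k : ℕ) (hk : 1 ≤ k) (y : Fin (2 * k + 2) → ℤ) :
    ∃ p : ℤ[X], aeval (gpCompanion k).mulVecLin p (lastVec k) = y := by
  apply cyc_surj (M := ℤ)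
  intro i
  exact ⟨_, comp_basis k hk (2 * k + 1 - i) i (by omega)⟩

/-! ### The cyclic shift -/

/-- The cyclic shift on `ℤ^{ℤ/n}`. -/
def shiftT (n : ℕ) : Module.End ℤ (ZMod n → ℤ) where
  toFun f i := f (i - 1)
  map_add' _ _ := rfl
  map_smul' _ _ := rfl

theorem shiftT_pow (n j : ℕ) (f : ZMod n → ℤ) (i : ZMod n) :
    (shiftT n ^ j) f i = f (i - j) := by
  induction j generalizing i with
  | zero => simp
  | succ j ih =>
    rw [pow_succ', Module.End.mul_apply]
    change (shiftT n ^ j) f (i - 1) = _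
    rw [ih]; congr 1; push_cast; ring

theorem shiftT_kill (n : ℕ) (f : ZMod n → ℤ) : aeval (shiftT n) (X ^ n - 1 : ℤ[X]) f = 0 := by
  ext i
  simp [shiftT_pow]

theorem shiftT_surj (n : ℕ) [NeZero n] (y : ZMod n → ℤ) :
    ∃ p : ℤ[X], aeval (shiftT n) p (Pi.single 0 1) = y := by
  apply cyc_surj (M := ℤ)
  intro i
  refine ⟨X ^ i.val, ?_⟩
  ext j
  rw [map_pow, aeval_X, shiftT_pow, ZMod.natCast_zmod_val]
  simp [Pi.single_apply, sub_eq_zero]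

/-- The operator `3 - T^j - T^{-j}`. -/
def opA (n : ℕ) (j : ZMod n) (f : ZMod n → ℤ) : ZMod n → ℤ :=
  fun i => 3 * f i - f (i + j) - f (i - j)

theorem shiftT_Q (n k : ℕ) (h : ZMod n → ℤ) :
    aeval (shiftT n) (gpCharPoly k) h =
      opA n k (opA n 1 (fun i => h (i - (k + 1)))) - (fun i => h (i - (k + 1))) := by
  have e3 : (3 : ℤ[X]) = C 3 := rfl
  have e8 : (8 : ℤ[X]) = C 8 := rfl
  ext i
  unfold gpCharPoly
  rw [e3, e8]
  have eX : (X : ℤ[X]) = X ^ 1 := (pow_one X).symm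
  have hx : shiftT n h i = h (i - 1) := rfl
  simp only [map_add, map_sub, map_mul, map_pow, map_one, aeval_X, aeval_C,
    LinearMap.add_apply, LinearMap.sub_apply, Module.End.mul_apply, Pi.add_apply, Pi.sub_apply,
    Module.End.one_apply, Module.algebraMap_end_apply, Pi.smul_apply, shiftT_pow, opA, smul_eq_mul,
    hx]
  push_cast
  have a1 : i + k + 1 - (k + 1) = i := by ring
  have a2 : i + k - (k + 1) = i - 1 := by ring
  have a3 : i + k - 1 - (k + 1) = i - 2 := by ring
  have a4 : i + 1 - (k + 1) = i - k := by ring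
  have a5 : i - 1 - (k + 1) = i - (k + 2) := by ring
  have a6 : i - k + 1 - (k + 1) = i - 2 * k := by ring
  have a7 : i - k - (k + 1) = i - (2 * k + 1) := by ring
  have a8 : i - k - 1 - (k + 1) = i - (2 * k + 2) := by ring
  rw [a1, a2, a3, a4, a5, a6, a7, a8]
  ring

/-! ### The Laplacian -/

theorem natCast_ne (n j : ℕ) (h0 : 0 < j) (hj : j < n) : (j : ZMod n) ≠ 0 := by
  rw [Ne, ZMod.natCast_eq_zero_iff]
  exact fun h => absurd (Nat.le_of_dvd h0 h) (by omega)

theorem nbr_inl (n k : ℕ) [NeZero n] (hn : 3 ≤ n) (i : ZMod n) :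
    (genPetersen n k).neighborFinset (Sum.inl i) =
      {Sum.inl (i + 1), Sum.inl (i - 1), Sum.inr i} := by
  have h1 := natCast_ne n 1 (by omega) (by omega)
  ext x
  rw [SimpleGraph.mem_neighborFinset]
  simp only [genPetersen, SimpleGraph.fromRel_adj]
  rcases x with j | j <;> simp [gpRel]
  · push_cast at h1
    grind

theorem nbr_inr (n k : ℕ) [NeZero n] (hk : 1 ≤ k) (hkn : 2 * k < n) (i : ZMod n) :
    (genPetersen n k).neighborFinset (Sum.inr i) =
      {Sum.inr (i + k), Sum.inr (i - k), Sum.inl i} := by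
  have h1 := natCast_ne n k (by omega) (by omega)
  ext x
  rw [SimpleGraph.mem_neighborFinset]
  simp only [genPetersen, SimpleGraph.fromRel_adj]
  rcases x with j | j <;> simp [gpRel]
  · grind
  · grind

theorem lap_apply (n k : ℕ) [NeZero n] (hn : 3 ≤ n) (hk : 1 ≤ k) (hkn : 2 * k < n)
    (F : ZMod n ⊕ ZMod n → ℤ) :
    ((genPetersen n k).lapMatrix ℤ).mulVecLin F =
      Sum.elim (opA n 1 (F ∘ Sum.inl) - F ∘ Sum.inr) (opA n k (F ∘ Sum.inr) - F ∘ Sum.inl) := by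
  have h2 := natCast_ne n 2 (by omega) (by omega)
  have h2k := natCast_ne n (2 * k) (by omega) (by omega)
  push_cast at h2 h2k
  have c1 : ∀ i : ZMod n, i + 1 ≠ i - 1 := by intro i h; apply h2; linear_combination h
  have ck : ∀ i : ZMod n, i + k ≠ i - k := by intro i h; apply h2k; linear_combination h
  ext v
  rw [Matrix.mulVecLin_apply, SimpleGraph.lapMatrix_mulVec_apply,
    ← SimpleGraph.card_neighborFinset_eq_degree]
  rcases v with i | i
  · rw [nbr_inl n k hn, Finset.sum_insert (by simp [c1]), Finset.sum_insert (by simp),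
      Finset.sum_singleton, Finset.card_insert_of_notMem (by simp [c1]),
      Finset.card_insert_of_notMem (by simp), Finset.card_singleton]
    simp [opA]; ring
  · rw [nbr_inr n k hk hkn, Finset.sum_insert (by simp [ck]), Finset.sum_insert (by simp),
      Finset.sum_singleton, Finset.card_insert_of_notMem (by simp [ck]),
      Finset.card_insert_of_notMem (by simp), Finset.card_singleton]
    simp [opA]; ring

/-- The inclusion of the inner coordinates. -/
def inrVec (n : ℕ) : (ZMod n → ℤ) →ₗ[ℤ] (ZMod n ⊕ ZMod n → ℤ) where
  toFun f := Sum.elim 0 f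
  map_add' f g := by ext (i | i) <;> simp
  map_smul' c f := by ext (i | i) <;> simp

theorem inr_mem_range (n k : ℕ) [NeZero n] (hn : 3 ≤ n) (hk : 1 ≤ k) (hkn : 2 * k < n)
    (y : ZMod n → ℤ) :
    inrVec n y ∈ LinearMap.range ((genPetersen n k).lapMatrix ℤ).mulVecLin ↔
      ∃ h, aeval (shiftT n) (gpCharPoly k) h = y := by
  constructor
  · rintro ⟨F, hF⟩
    rw [lap_apply n k hn hk hkn] at hF
    have h1 : opA n 1 (F ∘ Sum.inl) = F ∘ Sum.inr := by
      ext i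
      have := congrFun hF (Sum.inl i)
      simp [inrVec] at this
      simp; linarith
    have h2 : opA n k (F ∘ Sum.inr) - F ∘ Sum.inl = y := by
      ext i
      exact congrFun hF (Sum.inr i)
    refine ⟨fun i => F (Sum.inl (i + (k + 1))), ?_⟩
    rw [shiftT_Q]
    have h3 : (fun i : ZMod n => F (Sum.inl (i - (k + 1) + (k + 1)))) = F ∘ Sum.inl := by
      ext i; simp
    rw [h3, h1, h2]
  · rintro ⟨h, rfl⟩
    rw [shiftT_Q]
    generalize (fun i : ZMod n => h (i - (k + 1))) = f
    refine ⟨Sum.elim f (opA n 1 f), ?_⟩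
    rw [lap_apply n k hn hk hkn]
    simp [inrVec]

theorem inr_surj (n k : ℕ) [NeZero n] (hn : 3 ≤ n) (hk : 1 ≤ k) (hkn : 2 * k < n)
    (F : ZMod n ⊕ ZMod n → ℤ) :
    ∃ y, inrVec n y - F ∈ LinearMap.range ((genPetersen n k).lapMatrix ℤ).mulVecLin := by
  refine ⟨F ∘ Sum.inr + opA n k (F ∘ Sum.inl), Sum.elim 0 (F ∘ Sum.inl), ?_⟩
  rw [lap_apply n k hn hk hkn]
  ext (i | i) <;> simp [inrVec, opA]

theorem coker_lap_iso (n k : ℕ) (hn : 3 ≤ n) (hk : 1 ≤ k) (hkn : 2 * k < n) :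
    haveI : NeZero n := ⟨by omega⟩
    Nonempty (
      ((ZMod n ⊕ ZMod n → ℤ) ⧸
          LinearMap.range (Matrix.mulVecLin ((genPetersen n k).lapMatrix ℤ)))
        ≃+
      ((Fin (2 * k + 2) → ℤ) ⧸
          LinearMap.range (Matrix.mulVecLin (gpCompanion k ^ n - 1)))) := by

  haveI : NeZero n := ⟨by omega⟩
  obtain ⟨hm, hd⟩ := gp_monic_deg k hk
  let e1 : ℤ[X] →ₗ[ℤ] (ZMod n → ℤ) :=
    (LinearMap.applyₗ (Pi.single 0 1)).comp (aeval (shiftT n)).toLinearMap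
  let e2 : ℤ[X] →ₗ[ℤ] (Fin (2 * k + 2) → ℤ) :=
    (LinearMap.applyₗ (lastVec k)).comp (aeval (gpCompanion k).mulVecLin).toLinearMap
  have he1 : ∀ p, e1 p = aeval (shiftT n) p (Pi.single 0 1) := fun p => rfl
  have he2 : ∀ p, e2 p = aeval (gpCompanion k).mulVecLin p (lastVec k) := fun p => rfl
  refine equiv_of_ker (P := ℤ[X]) ((Submodule.mkQ _).comp ((inrVec n).comp e1))
    ((Submodule.mkQ _).comp e2) ?_ ?_ ?_
  · intro z
    obtain ⟨F, rfl⟩ := Submodule.mkQ_surjective _ z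
    obtain ⟨y, hy⟩ := inr_surj n k hn hk hkn F
    obtain ⟨p, hp⟩ := shiftT_surj n y
    refine ⟨p, ?_⟩
    rw [LinearMap.comp_apply, LinearMap.comp_apply, he1, hp]
    exact (Submodule.Quotient.eq _).2 hy
  · intro z
    obtain ⟨y, rfl⟩ := Submodule.mkQ_surjective _ z
    obtain ⟨p, hp⟩ := comp_surj k hk y
    exact ⟨p, by rw [LinearMap.comp_apply, he2, hp]⟩
  · intro p
    clear_value e1 e2
    rw [LinearMap.comp_apply, LinearMap.comp_apply, LinearMap.comp_apply, Submodule.mkQ_apply,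
      Submodule.mkQ_apply, Submodule.Quotient.mk_eq_zero, Submodule.Quotient.mk_eq_zero,
      inr_mem_range n k hn hk hkn, he1, he2, LinearMap.mem_range]
    have hA : (gpCompanion k ^ n - 1).mulVecLin =
        aeval (gpCompanion k).mulVecLin (X ^ n - 1 : ℤ[X]) := by
      rw [map_sub, map_pow, aeval_X, map_one, ← Matrix.toLin'_apply', ← Matrix.toLin'_apply',
        map_sub, Matrix.toLin'_pow, Matrix.toLin'_one]
      rfl
    rw [hA, cyc_mem (shiftT n) (Pi.single 0 1) (X ^ n - 1) (monic_X_pow_sub_C 1 (by omega))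
        (shiftT_surj n) (shiftT_kill n _)
        (by rw [Module.finrank_fintype_fun_eq_card, ZMod.card]
            exact (natDegree_X_pow_sub_C (r := (1 : ℤ))).symm),
      cyc_mem (gpCompanion k).mulVecLin (lastVec k) (gpCharPoly k) hm
        (comp_surj k hk) (comp_kill k hk) (by simp [hd])]
    constructor
    · rintro ⟨a, b, h⟩
      exact ⟨b, a, by rw [h, add_comm]⟩
    · rintro ⟨a, b, h⟩
      exact ⟨b, a, by rw [h, add_comm]⟩
end

section
/- Let n ≥ 3 and 1 ≤ k < n/2, let ε = exp(2πi/n) ∈ ℂ, and let P(z) = (3 − z − z^{−1})(3 − z^k − z^{−k}) − 1. Then n · τ(GP(n,k)) = ∏_{j=1}^{n−1} P(ε^j), as an equality in ℂ (with the natural number n·τ(GP(n,k)) cast to ℂ). -/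
open Polynomial

/-- The number of spanning trees of a graph `G`: the number of subgraphs that
contain all vertices and are trees. -/
noncomputable def numSpanningTrees {V : Type*} (G : SimpleGraph V) : ℕ :=
  Nat.card {H : G.Subgraph // H.IsSpanning ∧ H.coe.IsTree}

section MatrixTree
open Matrix Finset

variable {V : Type*} [Fintype V] [DecidableEq V]

/-- `f` has a depth function towards the root `r`. -/
def ToRoot (r : V) (f : V → V) : Prop := ∃ d : V → ℕ, ∀ v, v ≠ r → d (f v) < d v

def parentMat (r : V) (f : V → V) : Matrix V V ℂ :=
  fun v => Pi.single v 1 - (if v = r then 0 else Pi.single (f v) 1)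

lemma det_parentMat_of_toRoot (r : V) (f : V → V) (h : ToRoot r f) :
    (parentMat r f).det = 1 := by
  obtain ⟨d, hd⟩ := h
  have hB : (parentMat r f).BlockTriangular (fun v => OrderDual.toDual (d v)) := by
    intro i j hij
    have hij' : d i < d j := hij
    have h1 : j ≠ i := by rintro rfl; exact lt_irrefl _ hij'
    by_cases hi : i = r
    · simp [parentMat, hi]
      rw [Pi.single_eq_of_ne (hi ▸ h1)]
    · have h2 : j ≠ f i := by rintro rfl; exact absurd (hd i hi) (by omega)
      simp [parentMat, hi, Pi.single_eq_of_ne h1, Pi.single_eq_of_ne h2]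
  rw [hB.det]
  apply Finset.prod_eq_one
  intro a _
  have hone : (parentMat r f).toSquareBlock (fun v => OrderDual.toDual (d v)) a = 1 := ?_
  · rw [hone, Matrix.det_one]
  ext ⟨i, hi⟩ ⟨j, hj⟩
  have hij : d i = d j := by
    have : OrderDual.toDual (d i) = OrderDual.toDual (d j) := hi.trans hj.symm
    exact this
  simp only [toSquareBlock_def, of_apply, Matrix.one_apply, Subtype.mk.injEq, parentMat]
  by_cases hr : i = r
  · simp [hr, Pi.single_apply, eq_comm]
  · have h2 : j ≠ f i := by rintro rfl; exact absurd (hd i hr) (by omega)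
    simp [hr, Pi.single_apply, h2, eq_comm]

lemma det_parentMat_of_not (r : V) (f : V → V) (h : ¬ ToRoot r f) :
    (parentMat r f).det = 0 := by
  classical
  rw [← Matrix.exists_mulVec_eq_zero_iff]
  have hS : ∃ v, ∀ k, f^[k] v ≠ r := by
    by_contra hc
    push Not at hc
    apply h
    refine ⟨fun v => Nat.find (hc v), fun v hv => ?_⟩
    have h0 : Nat.find (hc v) ≠ 0 := by
      intro h0
      have := Nat.find_spec (hc v)
      rw [h0] at this
      exact hv this
    obtain ⟨m, hm⟩ := Nat.exists_eq_succ_of_ne_zero h0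
    have hs := Nat.find_spec (hc v)
    rw [hm, Function.iterate_succ_apply] at hs
    have := Nat.find_min' (hc (f v)) hs
    show Nat.find (hc (f v)) < Nat.find (hc v)
    omega
  obtain ⟨v0, hv0⟩ := hS
  let x : V → ℂ := fun v => if ∀ k, f^[k] v ≠ r then 1 else 0
  refine ⟨x, fun hx => ?_, ?_⟩
  · have := congrFun hx v0
    simp [x, hv0] at this
  · funext v
    have hxr : x r = 0 := by
      simp only [x]
      rw [if_neg]
      intro hk
      exact hk 0 rfl
    have key : v ≠ r → x v = x (f v) := by
      intro hv
      have : (∀ k, f^[k] v ≠ r) ↔ (∀ k, f^[k] (f v) ≠ r) := by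
        constructor
        · intro H k
          exact H (k+1)
        · intro H k
          cases k with
          | zero => exact hv
          | succ k => exact H k
      simp only [x, this]
    by_cases hv : v = r
    · simp [mulVec, parentMat, hv, hxr]
    · simp only [mulVec, parentMat, hv, if_false, Pi.zero_apply]
      rw [sub_dotProduct]
      simp [key hv]

variable (G : SimpleGraph V) [DecidableRel G.Adj]

lemma lap_row (v : V) :
    (G.lapMatrix ℂ) v = ∑ w ∈ G.neighborFinset v, ((Pi.single v 1 : V → ℂ) - Pi.single w 1) := by
  funext w
  simp only [SimpleGraph.lapMatrix, SimpleGraph.degMatrix, Matrix.sub_apply, Finset.sum_apply,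
    Pi.sub_apply, Finset.sum_sub_distrib, Matrix.diagonal_apply, SimpleGraph.adjMatrix_apply]
  simp [Pi.single_apply, eq_comm]

/-- Good parent functions. -/
def IsParent (r : V) (f : V → V) : Prop :=
  f r = r ∧ (∀ v, v ≠ r → G.Adj v (f v)) ∧ ToRoot r f

lemma det_root_eq_card (r : V) :
    ((G.lapMatrix ℂ).updateRow r (Pi.single r 1)).det = Nat.card {f : V → V // IsParent G r f} := by
  classical
  have h1 : ((G.lapMatrix ℂ).updateRow r (Pi.single r 1)) = fun v =>
      ∑ w ∈ (if v = r then {r} else G.neighborFinset v),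
        ((Pi.single v 1 : V → ℂ) - (if v = r then 0 else Pi.single w 1)) := by
    funext v
    by_cases hv : v = r
    · subst hv
      simp
    · rw [Matrix.updateRow_ne hv, lap_row]
      simp [hv]
  have h2 := (Matrix.detRowAlternating (n := V) (R := ℂ)).toMultilinearMap.map_sum_finset
    (fun v w => ((Pi.single v 1 : V → ℂ) - (if v = r then 0 else Pi.single w 1)))
    (fun v => (if v = r then {r} else G.neighborFinset v))
  rw [h1]
  refine h2.trans ?_
  have h3 : ∀ f : V → V, (Matrix.detRowAlternating (n := V) (R := ℂ)).toMultilinearMap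
     (fun v => ((Pi.single v 1 : V → ℂ) - (if v = r then 0 else Pi.single (f v) 1)))
      = if ToRoot r f then 1 else 0 := by
    intro f
    split_ifs with h
    · exact det_parentMat_of_toRoot r f h
    · exact det_parentMat_of_not r f h
  simp_rw [h3]
  rw [Finset.sum_boole, Nat.card_eq_fintype_card, Fintype.card_subtype]
  congr 2
  ext f
  rw [Finset.mem_filter, Finset.mem_filter, Fintype.mem_piFinset]
  simp only [Finset.mem_univ, true_and]
  unfold IsParent
  rw [← and_assoc]
  refine and_congr_left fun _ => ?_
  constructor
  · intro H
    refine ⟨by simpa using H r, fun v hv => by simpa [hv] using H v⟩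
  · rintro ⟨H1, H2⟩ v
    by_cases hv : v = r
    · subst hv; simpa using H1
    · simpa [hv] using H2 v hv

/-- Tree of a parent function -/
def parentGraph (r : V) (f : V → V) : SimpleGraph V :=
  SimpleGraph.fromRel (fun v w => v ≠ r ∧ w = f v)

omit [Fintype V] [DecidableEq V] in
lemma parentGraph_reach (r : V) (f : V → V) (h : ToRoot r f) (v : V) :
    (parentGraph r f).Reachable v r := by
  obtain ⟨d, hd⟩ := h
  induction hm : d v using Nat.strong_induction_on generalizing v with
  | _ m ih =>
    by_cases hv : v = r
    · subst hv; rfl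
    · have h1 := hd v hv
      refine SimpleGraph.Reachable.trans (v := f v) ?_ (ih _ (hm ▸ h1) _ rfl)
      apply SimpleGraph.Adj.reachable
      refine ⟨?_, Or.inl ⟨hv, rfl⟩⟩
      intro h
      rw [← h] at h1
      exact lt_irrefl _ h1

omit [Fintype V] [DecidableEq V] in
lemma parentGraph_conn (r : V) (f : V → V) (h : ToRoot r f) :
    (parentGraph r f).Connected := by
  have : Nonempty V := ⟨r⟩
  exact ⟨fun v w => (parentGraph_reach r f h v).trans (parentGraph_reach r f h w).symm⟩

omit [DecidableEq V] in
lemma parentGraph_tree (r : V) (f : V → V) (h : ToRoot r f) :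
    (parentGraph r f).IsTree := by
  classical
  have hc := parentGraph_conn r f h
  rw [SimpleGraph.isTree_iff_connected_and_card]
  refine ⟨hc, le_antisymm ?_ hc.card_vert_le_card_edgeSet_add_one⟩
  have h1 : (parentGraph r f).edgeSet ⊆
      (((Finset.univ.erase r).image (fun v => s(v, f v)) : Finset (Sym2 V)) : Set (Sym2 V)) := by
    intro e
    induction e with
    | _ a b =>
      intro hab
      have hab' : a ≠ b ∧ ((a ≠ r ∧ b = f a) ∨ (b ≠ r ∧ a = f b)) := hab
      obtain ⟨hne, h | h⟩ := hab'
      · simp only [Finset.coe_image, Set.mem_image]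
        exact ⟨a, by simpa using h.1, by rw [← h.2]⟩
      · simp only [Finset.coe_image, Set.mem_image]
        exact ⟨b, by simpa using h.1, by rw [← h.2, Sym2.eq_swap]⟩
  have h2 := Set.ncard_le_ncard h1 (Finset.finite_toSet _)
  rw [Set.ncard_coe_finset] at h2
  have h3 := h2.trans Finset.card_image_le
  rw [Finset.card_erase_of_mem (Finset.mem_univ r), Finset.card_univ] at h3
  have h4 : 0 < Fintype.card V := Fintype.card_pos_iff.mpr ⟨r⟩
  have h5 : Nat.card (parentGraph r f).edgeSet ≤ Fintype.card V - 1 := h3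
  rw [Nat.card_eq_fintype_card (α := V)]
  omega

omit [Fintype V] [DecidableEq V] in
lemma parentGraph_inj (r : V) (f g : V → V) (hf : ToRoot r f) (hfr : f r = r) (hgr : g r = r)
    (h : parentGraph r f = parentGraph r g) : f = g := by
  obtain ⟨d, hd⟩ := hf
  funext v
  induction hm : d v using Nat.strong_induction_on generalizing v with
  | _ m ih =>
    by_cases hv : v = r
    · rw [hv, hfr, hgr]
    · have h1 := hd v hv
      have hne : v ≠ f v := by
        intro h
        rw [← h] at h1
        exact lt_irrefl _ h1
      have hadj : (parentGraph r f).Adj v (f v) := ⟨hne, Or.inl ⟨hv, rfl⟩⟩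
      rw [h] at hadj
      obtain ⟨_, h2 | h2⟩ := hadj
      · exact h2.2
      · exfalso
        have h3 := ih _ (hm ▸ h1) (f v) rfl
        have h4 := hd (f v) h2.1
        rw [h3, ← h2.2] at h4
        omega

omit [Fintype V] [DecidableEq V] in
lemma exists_parent (T : SimpleGraph V) (hT : T.IsTree) (r : V) :
    ∃ f : V → V, IsParent T r f := by
  classical
  have hc := hT.connected
  have h1 : ∀ v, ∃ w, (v = r → w = r) ∧ (v ≠ r → T.Adj v w ∧ T.dist w r < T.dist v r) := by
    intro v
    by_cases hv : v = r
    · exact ⟨r, by simp [hv]⟩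
    · obtain ⟨p, hp⟩ := hc.exists_walk_length_eq_dist v r
      cases p with
      | nil => exact absurd rfl hv
      | cons hadj q =>
        rename_i w
        refine ⟨w, fun h => absurd h hv, fun _ => ⟨hadj, ?_⟩⟩
        rw [← hp, SimpleGraph.Walk.length_cons]
        exact Nat.lt_succ_of_le (SimpleGraph.dist_le q)
  choose f hf1 hf2 using h1
  exact ⟨f, hf1 r rfl, fun v hv => (hf2 v hv).1, fun v => T.dist v r, fun v hv => (hf2 v hv).2⟩

omit [Fintype V] [DecidableEq V] in
lemma parentGraph_le (r : V) (f : V → V) (H : SimpleGraph V)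
    (h : ∀ v, v ≠ r → H.Adj v (f v)) : parentGraph r f ≤ H := by
  rintro a b ⟨_, h1 | h1⟩
  · rw [h1.2]; exact h a h1.1
  · rw [h1.2]; exact (h b h1.1).symm

lemma card_parent (r : V) :
    Nat.card {f : V → V // IsParent G r f} = numSpanningTrees G := by
  unfold numSpanningTrees
  refine Nat.card_congr (Equiv.ofBijective (fun f => ⟨SimpleGraph.toSubgraph (parentGraph r f.1)
    (parentGraph_le r f.1 G f.2.2.1), SimpleGraph.toSubgraph.isSpanning _ _, ?_⟩) ⟨?_, ?_⟩)
  · rw [← (SimpleGraph.Subgraph.spanningCoeEquivCoeOfSpanning _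
      (SimpleGraph.toSubgraph.isSpanning _ _)).isTree_iff]
    exact parentGraph_tree r f.1 f.2.2.2
  · rintro ⟨f, hf⟩ ⟨g, hg⟩ h
    apply Subtype.ext
    refine parentGraph_inj r f g hf.2.2 hf.1 hg.1 ?_
    have := congrArg (fun x => x.1.spanningCoe) h
    exact this
  · rintro ⟨H, hs, ht⟩
    have hT : H.spanningCoe.IsTree :=
      (SimpleGraph.Subgraph.spanningCoeEquivCoeOfSpanning H hs).isTree_iff.mpr ht
    obtain ⟨f, hf⟩ := exists_parent _ hT r
    have hle := parentGraph_le r f H.spanningCoe hf.2.1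
    have heq : parentGraph r f = H.spanningCoe :=
      le_antisymm hle ((SimpleGraph.isTree_iff_minimal_connected.mp hT).2
        (parentGraph_conn r f hf.2.2) hle)
    refine ⟨⟨f, hf.1, fun v hv => H.adj_sub (hf.2.1 v hv), hf.2.2⟩, ?_⟩
    apply Subtype.ext
    apply SimpleGraph.Subgraph.ext
    · exact (SimpleGraph.Subgraph.isSpanning_iff.mp hs).symm
    · show (parentGraph r f).Adj = H.Adj
      rw [heq]
      rfl

/-- Perturbed Laplacian determinant. -/
lemma det_lap_add (s : V → ℂ) (r : V) (hs : s r = 1) (hs0 : ∑ v, s v ≠ 0) :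
    (G.lapMatrix ℂ + Matrix.of (fun i j => s i * s j)).det =
      (∑ v, s v) ^ 2 * numSpanningTrees G := by
  set L := G.lapMatrix ℂ with hL
  set M := L + Matrix.of (fun i j => s i * s j) with hM
  set N : ℂ := ∑ v, s v
  have hL1 : L *ᵥ (fun _ => 1) = 0 := G.lapMatrix_mulVec_const_eq_zero
  have hcol : ∀ j, ∑ i, L i j = 0 := by
    intro j
    have := congrFun hL1 j
    simp only [mulVec, dotProduct, mul_one, Pi.zero_apply] at this
    rw [← this]
    refine Finset.sum_congr rfl fun i _ => ?_
    exact (G.isSymm_lapMatrix (R := ℂ)).apply _ _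
  have h1 : M.det = (M.updateRow r (fun j => N * s j)).det := by
    have h := Matrix.det_updateRow_sum M r (fun _ => 1)
    rw [one_smul] at h
    rw [← h]
    congr 2
    funext j
    rw [Finset.sum_apply]
    simp only [one_smul, Pi.smul_apply, hM, Matrix.add_apply, Finset.sum_add_distrib, hcol,
      Matrix.of_apply, zero_add, N, Finset.sum_mul]
  have h2 : (M.updateRow r (fun j => N * s j)).det = (L.updateRow r (fun j => N * s j)).det := by
    refine Matrix.det_eq_of_forall_row_eq_smul_add_const
      (fun i => if i = r then 0 else s i / N) r (by simp) ?_
    intro i j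
    by_cases hi : i = r
    · subst hi; simp
    · rw [Matrix.updateRow_ne hi, Matrix.updateRow_ne hi, Matrix.updateRow_self]
      simp only [hi, if_false, hM, Matrix.add_apply, Matrix.of_apply]
      field_simp
  have h3 : (L.updateRow r ((fun j => N * s j) + (-(N^2)) • Pi.single r 1)).det = 0 := by
    rw [← Matrix.exists_mulVec_eq_zero_iff]
    refine ⟨fun _ => 1, fun h => one_ne_zero (congrFun h r), ?_⟩
    funext i
    by_cases hi : i = r
    · subst hi
      simp [mulVec, dotProduct, Finset.sum_add_distrib, ← Finset.mul_sum]
      simp [Pi.single_apply, N]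
      ring
    · have := congrFun hL1 i
      simpa [mulVec, hi] using this
  rw [Matrix.det_updateRow_add, Matrix.det_updateRow_smul, det_root_eq_card, card_parent] at h3
  rw [h1, h2]
  linear_combination h3

end MatrixTree
section Fourier
open Matrix Finset

variable {n : ℕ} [NeZero n]

lemma gp_nbr_inl (k : ℕ) (hn : 3 ≤ n) (i : ZMod n) :
    (genPetersen n k).neighborFinset (Sum.inl i) =
      {Sum.inl (i + 1), Sum.inl (i - 1), Sum.inr i} := by
  have : Fact (1 < n) := ⟨by omega⟩
  ext x
  rw [SimpleGraph.mem_neighborFinset]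
  rcases x with x | x
  · simp only [genPetersen, SimpleGraph.fromRel_adj, gpRel]
    simp [eq_sub_iff_add_eq]
    constructor
    · rintro ⟨_, h | h⟩
      · exact Or.inl h
      · exact Or.inr h.symm
    · rintro (h | h)
      · subst h; simp
      · subst h; simp
  · simp [genPetersen, SimpleGraph.fromRel_adj, gpRel]

lemma gp_nbr_inr (k : ℕ) (hk : (k : ZMod n) ≠ 0) (i : ZMod n) :
    (genPetersen n k).neighborFinset (Sum.inr i) =
      {Sum.inr (i + k), Sum.inr (i - k), Sum.inl i} := by
  ext x
  rw [SimpleGraph.mem_neighborFinset]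
  rcases x with x | x
  · simp [genPetersen, SimpleGraph.fromRel_adj, gpRel, eq_comm]
  · simp only [genPetersen, SimpleGraph.fromRel_adj, gpRel]
    simp [eq_sub_iff_add_eq]
    constructor
    · rintro ⟨_, h | h⟩
      · exact Or.inl h
      · exact Or.inr h.symm
    · rintro (h | h)
      · subst h; simp [hk]
      · subst h; simp [hk]

lemma add_ne_sub_aux (i c : ZMod n) (hc : c + c ≠ 0) : i + c ≠ i - c := by
  intro h
  apply hc
  linear_combination h

lemma gp_lap_inl (k : ℕ) (hn : 3 ≤ n) (i : ZMod n) (x : ZMod n ⊕ ZMod n → ℂ) :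
    ((genPetersen n k).lapMatrix ℂ *ᵥ x) (Sum.inl i) =
      3 * x (Sum.inl i) - x (Sum.inl (i + 1)) - x (Sum.inl (i - 1)) - x (Sum.inr i) := by
  have h2 : (1 : ZMod n) + 1 ≠ 0 := by
    have : ((2 : ℕ) : ZMod n) ≠ 0 := by
      rw [Ne, ZMod.natCast_eq_zero_iff]
      exact fun h => absurd (Nat.le_of_dvd (by norm_num) h) (by omega)
    norm_num at this ⊢
    exact this
  have h3 := add_ne_sub_aux i 1 h2
  rw [SimpleGraph.lapMatrix_mulVec_apply, ← SimpleGraph.card_neighborFinset_eq_degree,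
    gp_nbr_inl k hn, Finset.card_insert_of_notMem (by simp [h3]),
    Finset.card_insert_of_notMem (by simp), Finset.card_singleton,
    Finset.sum_insert (by simp [h3]), Finset.sum_insert (by simp), Finset.sum_singleton]
  push_cast
  ring

lemma gp_lap_inr (k : ℕ) (hk : 1 ≤ k) (hkn : 2 * k < n) (i : ZMod n)
    (x : ZMod n ⊕ ZMod n → ℂ) :
    ((genPetersen n k).lapMatrix ℂ *ᵥ x) (Sum.inr i) =
      3 * x (Sum.inr i) - x (Sum.inr (i + k)) - x (Sum.inr (i - k)) - x (Sum.inl i) := by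
  have h1 : (k : ZMod n) ≠ 0 := by
    rw [Ne, ZMod.natCast_eq_zero_iff]
    exact fun h => absurd (Nat.le_of_dvd (by omega) h) (by omega)
  have h2 : (k : ZMod n) + k ≠ 0 := by
    rw [← Nat.cast_add, Ne, ZMod.natCast_eq_zero_iff]
    exact fun h => absurd (Nat.le_of_dvd (by omega) h) (by omega)
  have h3 := add_ne_sub_aux i k h2
  rw [SimpleGraph.lapMatrix_mulVec_apply, ← SimpleGraph.card_neighborFinset_eq_degree,
    gp_nbr_inr k h1, Finset.card_insert_of_notMem (by simp [h3]),
    Finset.card_insert_of_notMem (by simp), Finset.card_singleton,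
    Finset.sum_insert (by simp [h3]), Finset.sum_insert (by simp), Finset.sum_singleton]
  push_cast
  ring

/-- DFT matrix. -/
noncomputable def dftMat (n : ℕ) [NeZero n] : Matrix (ZMod n) (ZMod n) ℂ :=
  Matrix.of fun i j => ZMod.stdAddChar (i * j)

lemma dftMat_det_ne : (dftMat n).det ≠ 0 := by
  have h : dftMat n * (Matrix.of fun i j => ZMod.stdAddChar (-(i * j))) = (n : ℂ) • 1 := by
    ext i j
    simp only [Matrix.mul_apply, dftMat, Matrix.of_apply, Matrix.smul_apply, Matrix.one_apply]
    have h1 := AddChar.sum_mulShift (i - j) (ZMod.isPrimitive_stdAddChar n)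
    rw [ZMod.card] at h1
    simp_rw [← AddChar.map_add_eq_mul]
    have h2 : ∀ x : ZMod n, i * x + -(x * j) = x * (i - j) := fun x => by ring
    simp_rw [h2]
    rw [h1]
    simp [sub_eq_zero]
  intro h0
  have h1 := congrArg Matrix.det h
  rw [Matrix.det_mul, h0, zero_mul, Matrix.det_smul, Matrix.det_one, mul_one] at h1
  exact pow_ne_zero _ (Nat.cast_ne_zero.mpr (NeZero.ne n)) h1.symm

lemma det_block_diag {m : Type*} [Fintype m] [DecidableEq m] (a d : m → ℂ) :
    (fromBlocks (diagonal a) (-1 : Matrix m m ℂ) (-1 : Matrix m m ℂ) (diagonal d)).det = ∏ j, (a j * d j - 1) := by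
  have h1 : fromBlocks (diagonal a) (-1) (-1) (diagonal d) * fromBlocks (diagonal d) (1 : Matrix m m ℂ) (1 : Matrix m m ℂ) (0 : Matrix m m ℂ) =
      fromBlocks (diagonal a * diagonal d - 1) (diagonal a) 0 (-1) := by
    rw [fromBlocks_multiply]
    congr 1 <;> simp [sub_eq_add_neg]
  have h2 : fromBlocks (diagonal d) (1 : Matrix m m ℂ) (1 : Matrix m m ℂ) (0 : Matrix m m ℂ) * fromBlocks 1 0 (-diagonal d) (1 : Matrix m m ℂ) =
      fromBlocks 0 1 1 0 := by
    rw [fromBlocks_multiply]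
    congr 1 <;> simp
  have h3 : fromBlocks (0 : Matrix m m ℂ) 1 1 0 * fromBlocks 1 (0 : Matrix m m ℂ) (0 : Matrix m m ℂ) (-1 : Matrix m m ℂ) *
      fromBlocks (1 : Matrix m m ℂ) (1 : Matrix m m ℂ) (0 : Matrix m m ℂ) (1 : Matrix m m ℂ) = fromBlocks 0 (-1) 1 1 := by
    rw [fromBlocks_multiply, fromBlocks_multiply]
    congr 1 <;> simp
  have h4 : fromBlocks (0 : Matrix m m ℂ) (-1 : Matrix m m ℂ) (1 : Matrix m m ℂ) (1 : Matrix m m ℂ) *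
      fromBlocks (1 : Matrix m m ℂ) (0 : Matrix m m ℂ) (-1 : Matrix m m ℂ) (1 : Matrix m m ℂ) =
      fromBlocks 1 (-1) 0 1 := by
    rw [fromBlocks_multiply]
    congr 1 <;> simp
  apply_fun Matrix.det at h1 h2 h3 h4
  simp only [det_mul, det_fromBlocks_zero₁₂, det_fromBlocks_zero₂₁, det_one, mul_one, one_mul]
    at h1 h2 h3 h4
  rw [h4] at h3
  rw [h2] at h1
  have h5 : diagonal a * diagonal d - 1 = diagonal (fun j => a j * d j - 1) := by
    rw [diagonal_mul_diagonal, ← diagonal_one, diagonal_sub]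
  rw [h5, det_diagonal] at h1
  have h6 : (-1 : Matrix m m ℂ).det ≠ 0 := by
    intro h
    rw [h, mul_zero] at h3
    exact zero_ne_one h3
  have h7 : (fromBlocks (0 : Matrix m m ℂ) (1 : Matrix m m ℂ) (1 : Matrix m m ℂ) (0 : Matrix m m ℂ)).det = (-1 : Matrix m m ℂ).det := by
    have h8 : (-1 : Matrix m m ℂ).det * (-1 : Matrix m m ℂ).det = 1 := by
      rw [← det_mul]; simp
    exact mul_right_cancel₀ h6 (h3.trans h8.symm)
  rw [h7] at h1
  exact mul_right_cancel₀ h6 h1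

lemma gp_det (k : ℕ) (hn : 3 ≤ n) (hk : 1 ≤ k) (hkn : 2 * k < n)
    (s : ZMod n ⊕ ZMod n → ℂ) (hs : s = Sum.elim (fun _ => 1) (fun _ => 0)) :
    ((genPetersen n k).lapMatrix ℂ + Matrix.of (fun i j => s i * s j)).det =
      ∏ j : ZMod n, ((3 - ZMod.stdAddChar j - ZMod.stdAddChar (-j) +
          if j = 0 then (n : ℂ) else 0) *
        (3 - ZMod.stdAddChar ((k : ZMod n) * j) - ZMod.stdAddChar (-((k : ZMod n) * j))) - 1) := by
  set F : Matrix (ZMod n ⊕ ZMod n) (ZMod n ⊕ ZMod n) ℂ :=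
    fromBlocks (dftMat n) 0 0 (dftMat n) with hF
  rw [← det_block_diag]
  have hdet : F.det ≠ 0 := by
    rw [hF, det_fromBlocks_zero₂₁]
    exact mul_ne_zero dftMat_det_ne dftMat_det_ne
  have hsum : ∀ c : ZMod n, ∑ x : ZMod n, dftMat n x c = if c = 0 then (n : ℂ) else 0 := by
    intro c
    have h1 := AddChar.sum_mulShift c (ZMod.isPrimitive_stdAddChar n)
    rw [ZMod.card] at h1
    simp only [dftMat, of_apply]
    rw [h1]
    simp
  have hmain : ((genPetersen n k).lapMatrix ℂ + Matrix.of (fun i j => s i * s j)) * F =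
      F * fromBlocks (diagonal fun j => (3 - ZMod.stdAddChar j - ZMod.stdAddChar (-j) +
          if j = 0 then (n : ℂ) else 0)) (-1) (-1)
        (diagonal fun j =>
          (3 - ZMod.stdAddChar ((k : ZMod n) * j) - ZMod.stdAddChar (-((k : ZMod n) * j)))) := by
    ext p q
    have hsplit : (((genPetersen n k).lapMatrix ℂ + Matrix.of (fun i j => s i * s j)) * F) p q
        = ((genPetersen n k).lapMatrix ℂ *ᵥ (fun v => F v q)) p
          + s p * ∑ v, s v * F v q := by
      rw [Matrix.add_mul, Matrix.add_apply, Finset.mul_sum]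
      congr 1
      simp only [mul_apply, of_apply, mul_assoc]
    rw [hsplit, hF, fromBlocks_multiply]
    have e1 : ∀ a b c : ZMod n, dftMat n (a + b) c = dftMat n a c * ZMod.stdAddChar (b * c) := by
      intro a b c
      simp only [dftMat, of_apply, add_mul, AddChar.map_add_eq_mul]
    rcases p with p | p
    · rw [gp_lap_inl k hn]
      rcases q with q | q
      · simp [hs, hsum, sub_eq_add_neg, e1]
        split_ifs with hq
        · simp [hq, dftMat]
        · ring
      · simp [hs]
    · rw [gp_lap_inr k hk hkn]
      rcases q with q | q
      · simp [hs]
      · simp [hs, sub_eq_add_neg, e1]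
        ring
  have := congrArg Matrix.det hmain
  rw [det_mul, det_mul, mul_comm] at this
  exact mul_left_cancel₀ hdet this

lemma gp_count (k : ℕ) (hn : 3 ≤ n) (hk : 1 ≤ k) (hkn : 2 * k < n) :
    ((n * numSpanningTrees (genPetersen n k) : ℕ) : ℂ) =
      ∏ j ∈ (Finset.univ.erase (0 : ZMod n)), ((3 - ZMod.stdAddChar j - ZMod.stdAddChar (-j)) *
        (3 - ZMod.stdAddChar ((k : ZMod n) * j) - ZMod.stdAddChar (-((k : ZMod n) * j))) - 1) := by
  have hn0 : (n : ℂ) ≠ 0 := Nat.cast_ne_zero.mpr (NeZero.ne n)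
  have hsum : ∑ v, (Sum.elim (fun _ => 1) (fun _ => 0) : ZMod n ⊕ ZMod n → ℂ) v = n := by
    simp [Fintype.sum_sum_type]
  have h1 := gp_det k hn hk hkn _ rfl
  rw [det_lap_add _ _ (Sum.inl 0) rfl (by rw [hsum]; exact hn0), hsum,
    ← Finset.mul_prod_erase _ _ (Finset.mem_univ (0 : ZMod n))] at h1
  have h2 : ((3 - ZMod.stdAddChar (0 : ZMod n) - ZMod.stdAddChar (-(0 : ZMod n)) +
          if (0 : ZMod n) = 0 then (n : ℂ) else 0) *
        (3 - ZMod.stdAddChar ((k : ZMod n) * 0) - ZMod.stdAddChar (-((k : ZMod n) * 0))) - 1) = n := by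
    simp
    ring
  rw [h2] at h1
  apply mul_left_cancel₀ hn0
  rw [Nat.cast_mul, ← mul_assoc, ← sq, h1]
  congr 1
  refine Finset.prod_congr rfl fun j hj => ?_
  rw [if_neg (Finset.ne_of_mem_erase hj), add_zero]

end Fourier

open Complex in
/-- `n·τ(GP(n,k)) = ∏_{j=1}^{n−1} P(ε^j)` where
`P(z) = (3 − z − z⁻¹)(3 − z^k − z^{−k}) − 1` and `ε = exp(2πi/n)`. -/
theorem spanning_tree_count_prod (n k : ℕ) (hn : 3 ≤ n) (hk : 1 ≤ k) (hkn : 2 * k < n) :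
    ((n * numSpanningTrees (genPetersen n k) : ℕ) : ℂ) =
      ∏ j ∈ Finset.Ico 1 n,
        ((3 - Complex.exp (2 * Real.pi * I / n) ^ (j : ℤ)
            - Complex.exp (2 * Real.pi * I / n) ^ (-(j : ℤ))) *
         (3 - Complex.exp (2 * Real.pi * I / n) ^ ((j : ℤ) * k)
            - Complex.exp (2 * Real.pi * I / n) ^ (-((j : ℤ) * k))) - 1) := by
  have : NeZero n := ⟨by omega⟩
  rw [gp_count k hn hk hkn]
  have hchar : ∀ m : ℤ, Complex.exp (2 * Real.pi * I / n) ^ m =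
      ZMod.stdAddChar ((m : ℤ) : ZMod n) := by
    intro m
    rw [ZMod.stdAddChar_coe, ← Complex.exp_int_mul]
    congr 1
    ring
  simp_rw [hchar]
  symm
  refine Finset.prod_bij (fun j _ => (j : ZMod n)) ?_ ?_ ?_ ?_
  · intro j hj
    rw [Finset.mem_Ico] at hj
    refine Finset.mem_erase.mpr ⟨?_, Finset.mem_univ _⟩
    rw [Ne, ZMod.natCast_eq_zero_iff]
    exact fun h => absurd (Nat.le_of_dvd (by omega) h) (by omega)
  · intro a ha b hb hab
    rw [Finset.mem_Ico] at ha hb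
    have := congrArg ZMod.val hab
    rwa [ZMod.val_natCast_of_lt ha.2, ZMod.val_natCast_of_lt hb.2] at this
  · intro b hb
    have hb0 := Finset.ne_of_mem_erase hb
    refine ⟨b.val, Finset.mem_Ico.mpr ⟨?_, ZMod.val_lt b⟩, ZMod.natCast_zmod_val b⟩
    exact Nat.one_le_iff_ne_zero.mpr (fun h => hb0 ((ZMod.val_eq_zero b).mp h))
  · intro j _
    push_cast
    rw [mul_comm (k : ZMod n)]
end

section
/- For every integer n ≥ 3, the number of spanning trees of the prism graph GP(n,1) is τ(GP(n,1)) = n·(T_n(2) − 1), where T_n(2) is the integer value of the n-th Chebyshev polynomial of the first kind at 2. -/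
open Polynomial

namespace PrismAux

/-- Parent functions pointing towards the root `r`. -/
def Good {V : Type*} (G : SimpleGraph V) (r : V) (f : V → V) : Prop :=
  f r = r ∧ (∀ v, v ≠ r → G.Adj v (f v)) ∧ ∀ v, ∃ k, f^[k] v = r

/-- The graph of a parent function. -/
def parentGraph {V : Type*} (r : V) (f : V → V) : SimpleGraph V :=
  SimpleGraph.fromRel (fun a b => a ≠ r ∧ f a = b)

lemma exists_depth {V : Type*} {r : V} {f : V → V} (h : ∀ v, ∃ k, f^[k] v = r) :
    ∃ d : V → ℕ, ∀ v, v ≠ r → d (f v) < d v := by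
  classical
  refine ⟨fun v => Nat.find (h v), fun v hv => ?_⟩
  have h1 := Nat.find_spec (h v)
  obtain hk | ⟨m, hm⟩ : Nat.find (h v) = 0 ∨ ∃ m, Nat.find (h v) = m + 1 := by
    cases Nat.find (h v) <;> simp
  · rw [hk] at h1
    exact absurd h1 hv
  · rw [hm] at h1
    change Nat.find (h (f v)) < Nat.find (h v)
    rw [hm]
    refine Nat.lt_succ_of_le (Nat.find_min' _ ?_)
    simpa [Function.iterate_succ_apply] using h1

lemma reach_of_depth {V : Type*} {r : V} {f : V → V} (d : V → ℕ)
    (h : ∀ v, v ≠ r → d (f v) < d v) : ∀ v, ∃ k, f^[k] v = r := by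
  intro v
  induction hn : d v using Nat.strong_induction_on generalizing v with
  | _ n ih =>
    by_cases hv : v = r
    · exact ⟨0, hv⟩
    · obtain ⟨k, hk⟩ := ih (d (f v)) (hn ▸ h v hv) (f v) rfl
      exact ⟨k + 1, by simpa [Function.iterate_succ_apply] using hk⟩

lemma good_ne {V : Type*} {G : SimpleGraph V} {r : V} {f : V → V} (h : Good G r f) {v : V}
    (hv : v ≠ r) : v ≠ f v := (h.2.1 v hv).ne

lemma parentGraph_adj {V : Type*} {G : SimpleGraph V} {r : V} {f : V → V} (h : Good G r f)
    {v : V} (hv : v ≠ r) : (parentGraph r f).Adj v (f v) := by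
  simp [parentGraph, SimpleGraph.fromRel_adj, good_ne h hv, hv]

lemma parentGraph_le {V : Type*} {H : SimpleGraph V} {r : V} {f : V → V}
    (h : ∀ v, v ≠ r → H.Adj v (f v)) : parentGraph r f ≤ H := by
  intro a b hab
  rw [parentGraph, SimpleGraph.fromRel_adj] at hab
  rcases hab with ⟨-, ⟨h1, rfl⟩ | ⟨h1, rfl⟩⟩
  · exact h _ h1
  · exact (h _ h1).symm

lemma parentGraph_connected {V : Type*} {G : SimpleGraph V} {r : V} {f : V → V}
    (h : Good G r f) : (parentGraph r f).Connected := by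
  have key : ∀ k v, f^[k] v = r → (parentGraph r f).Reachable v r := by
    intro k
    induction k with
    | zero => intro v hv; simp at hv; subst hv; exact SimpleGraph.Reachable.refl _
    | succ k ih =>
      intro v hv
      by_cases hvr : v = r
      · subst hvr; exact SimpleGraph.Reachable.refl _
      · exact (parentGraph_adj h hvr).reachable.trans (ih _ (by simpa using hv))
  have key' : ∀ v, (parentGraph r f).Reachable v r := fun v => by
    obtain ⟨k, hk⟩ := h.2.2 v
    exact key k v hk
  have : Nonempty V := ⟨r⟩
  exact ⟨fun a b => (key' a).trans (key' b).symm⟩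

lemma parentGraph_isTree {V : Type*} [Fintype V] {G : SimpleGraph V} {r : V} {f : V → V}
    (h : Good G r f) : (parentGraph r f).IsTree := by
  classical
  rw [SimpleGraph.isTree_iff_connected_and_card]
  refine ⟨parentGraph_connected h, le_antisymm ?_ ?_⟩
  · have hsub : (parentGraph r f).edgeSet ⊆
        ((Finset.univ.erase r).image (fun v => s(v, f v)) : Finset (Sym2 V)) := by
      intro e
      induction e with
      | _ a b =>
        intro hab
        rw [SimpleGraph.mem_edgeSet, parentGraph, SimpleGraph.fromRel_adj] at hab
        simp only [Finset.coe_image, Set.mem_image, Finset.mem_coe, Finset.mem_erase,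
          Finset.mem_univ, and_true]
        rcases hab with ⟨-, ⟨h1, rfl⟩ | ⟨h1, rfl⟩⟩
        · exact ⟨a, h1, rfl⟩
        · exact ⟨b, h1, Sym2.eq_swap⟩
    have h1 := Set.ncard_le_ncard hsub (Finset.finite_toSet _)
    rw [Set.ncard_coe_finset] at h1
    have h2 : ((Finset.univ.erase r).image (fun v => s(v, f v))).card ≤ _ := Finset.card_image_le
    rw [Finset.card_erase_of_mem (Finset.mem_univ _), Finset.card_univ] at h2
    have h3 : 0 < Fintype.card V := Fintype.card_pos_iff.2 ⟨r⟩
    rw [Nat.card_coe_set_eq, Nat.card_eq_fintype_card]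
    omega
  · exact (parentGraph_connected h).card_vert_le_card_edgeSet_add_one

lemma parentGraph_inj {V : Type*} {G : SimpleGraph V} {r : V} {f g : V → V}
    (hf : Good G r f) (hg : Good G r g) (h : parentGraph r f = parentGraph r g) : f = g := by
  obtain ⟨d, hd⟩ := exists_depth hf.2.2
  have key : ∀ v, v ≠ r → f v ≠ g v → f v ≠ r ∧ f (f v) ≠ g (f v) := by
    intro v hv hne
    have h1 := parentGraph_adj hf hv
    rw [h, parentGraph, SimpleGraph.fromRel_adj] at h1
    rcases h1 with ⟨-, ⟨_, h2⟩ | ⟨h2, h3⟩⟩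
    · exact absurd h2.symm hne
    · refine ⟨h2, fun h4 => ?_⟩
      have a1 := hd v hv
      have a2 := hd (f v) h2
      rw [h4, h3] at a2
      omega
  have key2 : ∀ n v, d v = n → v ≠ r → f v = g v := by
    intro n
    induction n using Nat.strong_induction_on with
    | _ n ih =>
      intro v hn hv
      by_contra hne
      obtain ⟨h1, h2⟩ := key v hv hne
      exact h2 (ih _ (hn ▸ hd v hv) _ rfl h1)
  funext v
  by_cases hv : v = r
  · rw [hv, hf.1, hg.1]
  · exact key2 _ v rfl hv

lemma exists_good {V : Type*} {G H : SimpleGraph V} (hle : H ≤ G) (hH : H.IsTree)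
    (r : V) : ∃ f, Good G r f ∧ parentGraph r f = H := by
  classical
  have hc := hH.connected
  have step : ∀ v, ∃ w, (v = r → w = r) ∧ (v ≠ r → H.Adj v w ∧ H.dist w r < H.dist v r) := by
    intro v
    by_cases hv : v = r
    · exact ⟨r, fun _ => rfl, fun h => absurd hv h⟩
    · obtain ⟨p, hp⟩ := hc.exists_walk_length_eq_dist v r
      cases p with
      | nil => exact absurd rfl hv
      | cons hadj q =>
        refine ⟨_, fun h => absurd h hv, fun _ => ⟨hadj, ?_⟩⟩
        have := SimpleGraph.dist_le q
        simp at hp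
        omega
  choose f hf1 hf2 using step
  have hfr : f r = r := hf1 r rfl
  have hgood : Good G r f := ⟨hfr, fun v hv => hle (hf2 v hv).1,
    reach_of_depth (fun v => H.dist v r) fun v hv => (hf2 v hv).2⟩
  refine ⟨f, hgood, ?_⟩
  have hmin := SimpleGraph.isTree_iff_minimal_connected.1 hH
  have hle' : parentGraph r f ≤ H := parentGraph_le fun v hv => (hf2 v hv).1
  exact le_antisymm hle' (hmin.2 (parentGraph_connected hgood) hle')

lemma card_good {V : Type*} [Fintype V] (G : SimpleGraph V) (r : V) :
    numSpanningTrees G = Nat.card {f : V → V // Good G r f} := by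
  unfold numSpanningTrees
  symm
  let F : {f : V → V // Good G r f} → {H : G.Subgraph // H.IsSpanning ∧ H.coe.IsTree} :=
    fun f => ⟨SimpleGraph.toSubgraph (G := G) (parentGraph r f.1) (parentGraph_le f.2.2.1),
      SimpleGraph.toSubgraph.isSpanning _ _, by
        rw [← (SimpleGraph.Subgraph.spanningCoeEquivCoeOfSpanning _
          (SimpleGraph.toSubgraph.isSpanning _ _)).isTree_iff]
        exact parentGraph_isTree f.2⟩
  refine Nat.card_congr (Equiv.ofBijective F ⟨?_, ?_⟩)
  · intro f g hfg
    have h1 := congrArg (fun H => SimpleGraph.Subgraph.spanningCoe H.1) hfg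
    exact Subtype.ext (parentGraph_inj f.2 g.2 h1)
  · rintro ⟨H, hs, ht⟩
    rw [← (H.spanningCoeEquivCoeOfSpanning hs).isTree_iff] at ht
    obtain ⟨f, hf, hfH⟩ := exists_good H.spanningCoe_le ht r
    refine ⟨⟨f, hf⟩, Subtype.ext ?_⟩
    apply SimpleGraph.Subgraph.ext
    · exact (SimpleGraph.Subgraph.isSpanning_iff.1 hs).symm
    · exact congrArg SimpleGraph.Adj hfH

/-- One-edge contribution to the row of `v`. -/
def rowTerm {V : Type*} [DecidableEq V] (G : SimpleGraph V) [DecidableRel G.Adj] (r v w : V) :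
    V → ℤ :=
  if v = r then (if w = r then Pi.single r 1 else 0)
  else if G.Adj v w then Pi.single v 1 - Pi.single w 1 else 0

/-- The Laplacian with row `r` replaced by a unit vector. -/
def redLap {V : Type*} [Fintype V] [DecidableEq V] (G : SimpleGraph V) [DecidableRel G.Adj]
    (r : V) : Matrix V V ℤ := (G.lapMatrix ℤ).updateRow r (Pi.single r 1)

lemma redLap_eq {V : Type*} [Fintype V] [DecidableEq V] (G : SimpleGraph V) [DecidableRel G.Adj]
    (r : V) : redLap G r = Matrix.of fun v => ∑ w, rowTerm G r v w := by
  ext v x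
  by_cases hv : v = r
  · subst hv
    simp [redLap, rowTerm]
  · simp only [redLap, rowTerm, Matrix.updateRow_ne hv, if_neg hv]
    rw [Matrix.of_apply, Finset.sum_apply]
    simp only [if_neg hv]
    have : ∀ w, (if G.Adj v w then Pi.single v 1 - Pi.single w 1 else (0 : V → ℤ)) x
        = (if G.Adj v w then (Pi.single v 1 : V → ℤ) x else 0) - 
          (if w = x then (if G.Adj v x then 1 else 0) else 0) := by
      intro w
      by_cases hwx : w = x
      · subst hwx; by_cases h : G.Adj v w <;> simp [h]
      · have hxw : x ≠ w := fun h => hwx h.symm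
        split_ifs <;> simp [hxw]
    simp only [this, Finset.sum_sub_distrib]
    simp [SimpleGraph.lapMatrix, SimpleGraph.degMatrix, SimpleGraph.adjMatrix_apply,
      Finset.sum_ite]
    by_cases hvx : v = x
    · subst hvx; simp [SimpleGraph.card_neighborFinset_eq_degree, ← SimpleGraph.neighborFinset_eq_filter]
    · have hxv : x ≠ v := fun h => hvx h.symm
      simp [hvx, hxv]

open Classical in
lemma det_term {V : Type*} [Fintype V] [DecidableEq V] (G : SimpleGraph V) [DecidableRel G.Adj]
    (r : V) (f : V → V) :
    Matrix.det (Matrix.of fun v => rowTerm G r v (f v)) = if Good G r f then 1 else 0 := by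
  by_cases hr : f r = r
  swap
  · rw [if_neg fun h => hr h.1]
    exact Matrix.det_eq_zero_of_row_eq_zero r fun j => by simp [rowTerm, hr]
  by_cases ha : ∀ v, v ≠ r → G.Adj v (f v)
  swap
  · rw [if_neg fun h => ha h.2.1]
    push Not at ha
    obtain ⟨v, hv, hv'⟩ := ha
    exact Matrix.det_eq_zero_of_row_eq_zero v fun j => by simp [rowTerm, hv, hv']
  by_cases hd : ∀ v, ∃ k, f^[k] v = r
  · rw [if_pos ⟨hr, ha, hd⟩]
    obtain ⟨d, hd'⟩ := exists_depth hd
    have hb : Matrix.BlockTriangular (Matrix.of fun v => rowTerm G r v (f v))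
        (fun v => OrderDual.toDual (d v)) := by
      intro i j hij
      have hij' : d i < d j := hij
      have hne : j ≠ i := fun h => by rw [h] at hij'; omega
      by_cases hi : i = r
      · subst hi; simp [rowTerm, hr, hne]
      · have := hd' i hi
        have hne2 : j ≠ f i := fun h => by rw [h] at hij'; omega
        simp [rowTerm, hi, ha i hi, hne, hne2]
    rw [hb.det]
    refine Finset.prod_eq_one fun a _ => ?_
    have hone : ((Matrix.of fun v => rowTerm G r v (f v)).toSquareBlock
        (fun v => OrderDual.toDual (d v)) a) = 1 := ?_
    · rw [hone, Matrix.det_one]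
    ext ⟨i, hi⟩ ⟨j, hj⟩
    have hij : d i = d j := OrderDual.toDual.injective (hi.trans hj.symm)
    simp only [Matrix.toSquareBlock_def, Matrix.of_apply, Matrix.one_apply, Subtype.mk.injEq]
    by_cases hir : i = r
    · subst hir; simp [rowTerm, hr, Pi.single_apply, @eq_comm _ j]
    · have := hd' i hir
      have hne2 : j ≠ f i := fun h => by rw [h] at hij; omega
      simp [rowTerm, hir, ha i hir, hne2, Pi.single_apply, @eq_comm _ j]
  · rw [if_neg fun h => hd h.2.2]
    rw [← Matrix.exists_mulVec_eq_zero_iff]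
    push Not at hd
    obtain ⟨v0, hv0⟩ := hd
    refine ⟨fun v => if ∃ k, f^[k] v = r then 0 else 1, ?_, ?_⟩
    · intro h
      have := congrFun h v0
      simp [hv0] at this
    · funext v
      by_cases hv : v = r
      · subst hv
        have : ∃ k, f^[k] v = v := ⟨0, rfl⟩
        simp [Matrix.mulVec, rowTerm, hr, this]
      · have : (∃ k, f^[k] v = r) ↔ ∃ k, f^[k] (f v) = r := by
          constructor
          · rintro ⟨k, hk⟩
            cases k with
            | zero => exact absurd hk hv
            | succ k => exact ⟨k, by simpa using hk⟩
          · rintro ⟨k, hk⟩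
            exact ⟨k + 1, by simpa using hk⟩
        have hrow : (Matrix.of fun v => rowTerm G r v (f v)) v
            = Pi.single v 1 - Pi.single (f v) 1 := by
          funext j
          simp [rowTerm, hv, ha v hv]
        rw [Matrix.mulVec, hrow, sub_dotProduct]
        simp [this]

theorem matrix_tree {V : Type*} [Fintype V] [DecidableEq V] (G : SimpleGraph V)
    [DecidableRel G.Adj] (r : V) : (redLap G r).det = numSpanningTrees G := by
  classical
  rw [card_good G r, redLap_eq]
  have h := (Matrix.detRowAlternating (R := ℤ) (n := V)).toMultilinearMap.map_sum
    (fun v w => rowTerm G r v w)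
  change Matrix.det (Matrix.of fun v => ∑ w, rowTerm G r v w)
    = ∑ f : V → V, Matrix.det (Matrix.of fun v => rowTerm G r v (f v)) at h
  rw [h]
  simp only [det_term]
  rw [Finset.sum_boole, Nat.card_eq_fintype_card, Fintype.card_subtype]

end PrismAux
namespace PrismAux

theorem det_lap_add_ones {V : Type*} [Fintype V] [DecidableEq V] (G : SimpleGraph V)
    [DecidableRel G.Adj] (r : V) :
    (G.lapMatrix ℤ + Matrix.of fun _ _ => 1).det =
      (Fintype.card V : ℤ) ^ 2 * (redLap G r).det := by
  set L := G.lapMatrix ℤ with hL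
  set N : ℤ := (Fintype.card V : ℤ) with hN
  have hrow : ∀ i, ∑ j, L i j = 0 := by
    intro i
    have := congrFun (G.lapMatrix_mulVec_const_eq_zero (R := ℤ)) i
    simpa [Matrix.mulVec, dotProduct] using this
  have hcol : ∀ j, ∑ i, L i j = 0 := by
    intro j
    rw [← hrow j]
    exact Finset.sum_congr rfl fun i _ => (G.isSymm_lapMatrix (R := ℤ)).apply j i
  set B : Matrix V V ℤ := L + Matrix.of fun _ _ => 1 with hB
  have h1 : B.det = N * (B.updateRow r (fun _ => 1)).det := by
    have := Matrix.det_updateRow_sum B r (fun _ => 1)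
    rw [one_smul] at this
    rw [← this, ← Matrix.det_updateRow_smul]
    congr 2
    funext j
    have hBj : ∀ k, B k j = L k j + 1 := fun k => rfl
    rw [Finset.sum_apply]
    simp [hBj, Finset.sum_add_distrib, hcol, hN]
  have h2 : (B.updateRow r (fun _ => 1)).det = (L.updateRow r (fun _ => 1)).det := by
    refine Matrix.det_eq_of_forall_row_eq_smul_add_const (fun i => if i = r then 0 else 1) r
      (by simp) fun i j => ?_
    by_cases hi : i = r
    · subst hi; simp
    · simp [Matrix.updateRow_apply, hi, hB]
  have h3 : (L.updateRow r (fun _ => 1)).det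
      = N * ((L.updateRow r (fun _ => 1)).updateCol r (Pi.single r 1)).det := by
    have := Matrix.det_updateCol_sum (L.updateRow r (fun _ => 1)) r (fun _ => 1)
    rw [one_smul] at this
    rw [← this, ← Matrix.det_updateCol_smul]
    congr 2
    funext i
    by_cases hi : i = r
    · subst hi; simp [hN]
    · simp [Matrix.updateRow_apply, hi, hrow]
  have h4 : (redLap G r).det = ((redLap G r).updateCol r (Pi.single r 1)).det := by
    have := Matrix.det_updateCol_sum (redLap G r) r (fun _ => 1)
    rw [one_smul] at this
    rw [← this]
    congr 2
    funext i
    by_cases hi : i = r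
    · subst hi; simp [redLap]
    · simp [redLap, Matrix.updateRow_apply, hi, ← hL, hrow]
  have h5 : ((L.updateRow r (fun _ => 1)).updateCol r (Pi.single r 1)).det
      = ((redLap G r).updateCol r (Pi.single r 1)).det := by
    rw [← Matrix.det_transpose, ← Matrix.det_transpose ((redLap G r).updateCol r _)]
    refine Matrix.det_eq_of_forall_row_eq_smul_add_const (fun i => if i = r then 0 else 1) r
      (by simp) fun j i => ?_
    simp only [Matrix.transpose_apply]
    by_cases hi : i = r
    · subst hi
      by_cases hj : j = i
      · subst hj; simp
      · simp [redLap, Matrix.updateCol_apply, hj]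
    · by_cases hj : j = r
      · subst hj; simp
      · simp [redLap, Matrix.updateRow_apply, Matrix.updateCol_apply, hi, hj, ← hL]
  rw [h1, h2, h3, h5, ← h4]
  ring

lemma det_fromBlocks_sym {m : Type*} [Fintype m] [DecidableEq m] (X Y : Matrix m m ℂ) :
    (Matrix.fromBlocks X Y Y X).det = (X + Y).det * (X - Y).det := by
  have h : Matrix.fromBlocks 1 0 (-1) 1 * (Matrix.fromBlocks X Y Y X * Matrix.fromBlocks 1 0 1 1)
      = Matrix.fromBlocks (X + Y) Y 0 (X - Y) := by
    simp only [Matrix.fromBlocks_multiply]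
    congr 1 <;> simp
    · abel
    · abel
  have := congrArg Matrix.det h
  simpa [Matrix.det_mul, Matrix.det_fromBlocks_zero₂₁, Matrix.det_fromBlocks_zero₁₂] using this

section circ
variable (n : ℕ) [NeZero n]

/-- A circulant matrix indexed by `ZMod n`. -/
def circ (c : ZMod n → ℂ) : Matrix (ZMod n) (ZMod n) ℂ := Matrix.of fun i j => c (j - i)

local notation "χ" => ZMod.stdAddChar

lemma det_circ (c : ZMod n → ℂ) :
    (circ n c).det = ∏ k : ZMod n, ∑ d, c d * (χ (d * k) : ℂ) := by
  let F : Matrix (ZMod n) (ZMod n) ℂ := Matrix.of fun i k => (χ (i * k) : ℂ)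
  let F' : Matrix (ZMod n) (ZMod n) ℂ := Matrix.of fun i k => (χ (-(i * k)) : ℂ)
  have hF : F * F' = (n : ℂ) • (1 : Matrix (ZMod n) (ZMod n) ℂ) := by
    ext i j
    have h := AddChar.sum_mulShift (i - j) (ZMod.isPrimitive_stdAddChar n)
    rw [Matrix.mul_apply]
    simp only [F, F', Matrix.of_apply, ← AddChar.map_add_eq_mul]
    have : ∀ x : ZMod n, i * x + -(x * j) = x * (i - j) := fun x => by ring
    simp only [this, h, Matrix.smul_apply, Matrix.one_apply, sub_eq_zero, ZMod.card]
    simp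
  have hFdet : F.det ≠ 0 := by
    intro h0
    have := congrArg Matrix.det hF
    rw [Matrix.det_mul, h0, zero_mul, Matrix.det_smul, Matrix.det_one, mul_one] at this
    exact pow_ne_zero _ (Nat.cast_ne_zero.2 (NeZero.ne n)) this.symm
  have hmul : circ n c * F = F * Matrix.diagonal fun k => ∑ d, c d * (χ (d * k) : ℂ) := by
    ext i k
    rw [Matrix.mul_apply, Matrix.mul_diagonal, Finset.mul_sum]
    rw [← Equiv.sum_comp (Equiv.addRight i)]
    refine Finset.sum_congr rfl fun d _ => ?_
    simp only [circ, F, Matrix.of_apply, Equiv.coe_addRight, add_sub_cancel_right, add_mul,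
      AddChar.map_add_eq_mul]
    ring
  have := congrArg Matrix.det hmul
  rw [Matrix.det_mul, Matrix.det_mul, Matrix.det_diagonal, mul_comm] at this
  exact mul_left_cancel₀ hFdet this

lemma chi_pow (k : ZMod n) : (χ k : ℂ) ^ n = 1 := by
  rw [← AddChar.map_nsmul_eq_pow]
  simp

lemma prod_sub_chi (x y : ℂ) : ∏ k : ZMod n, (x - (χ k : ℂ) * y) = x ^ n - y ^ n := by
  classical
  have hpos : 0 < n := NeZero.pos n
  have hprim := Complex.isPrimitiveRoot_exp n (NeZero.ne n)
  rw [hprim.pow_sub_pow_eq_prod_sub_mul x y hpos]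
  have himg : Finset.univ.image (fun k : ZMod n => (χ k : ℂ)) = Polynomial.nthRootsFinset n 1 := by
    apply Finset.eq_of_subset_of_card_le
    · intro z hz
      obtain ⟨k, -, rfl⟩ := Finset.mem_image.1 hz
      exact (Polynomial.mem_nthRootsFinset hpos _).2 (chi_pow n k)
    · rw [Finset.card_image_of_injective _ ZMod.injective_stdAddChar, hprim.card_nthRootsFinset,
        Finset.card_univ, ZMod.card]
  rw [← himg, Finset.prod_image fun a _ b _ h => ZMod.injective_stdAddChar h]

lemma prod_one_sub_chi : ∏ k ∈ Finset.univ.erase (0 : ZMod n), (1 - (χ k : ℂ)) = n := by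
  have h1 : ∏ k : ZMod n, (X - C (χ k : ℂ)) = X ^ n - 1 := by
    apply Polynomial.funext
    intro x
    rw [Polynomial.eval_prod]
    simpa using prod_sub_chi n x 1
  rw [← Finset.mul_prod_erase _ _ (Finset.mem_univ (0 : ZMod n)), ← mul_geom_sum] at h1
  simp only [AddChar.map_zero_eq_one, map_one] at h1
  have h2 := mul_left_cancel₀ (by simpa using Polynomial.X_sub_C_ne_zero (1 : ℂ)) h1
  have h3 := congrArg (Polynomial.eval 1) h2
  rw [Polynomial.eval_prod] at h3
  simpa [Polynomial.eval_finsetSum] using h3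

lemma prod_chi_neg (f : ZMod n → ℂ) : ∏ k : ZMod n, f (-k) = ∏ k, f k :=
  Equiv.prod_comp (Equiv.neg (ZMod n)) f

lemma det_A (a b : ℂ) (hab : a + b = 4) (hab' : a * b = 1) :
    (circ n fun d => (if d = 0 then 4 else 0) - (if d = 1 then 1 else 0)
      - (if d = -1 then 1 else 0)).det = a ^ n + b ^ n - 2 := by
  rw [det_circ]
  have h : ∀ k : ZMod n, ∑ d, (((if d = 0 then 4 else 0) - (if d = 1 then 1 else 0)
      - (if d = -1 then 1 else 0)) : ℂ) * (χ (d * k) : ℂ)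
      = (a - χ k * 1) * (1 - χ (-k) * b) := by
    intro k
    have hk : (χ k : ℂ) * χ (-k) = 1 := by
      rw [← AddChar.map_add_eq_mul]; simp
    simp only [sub_mul, Finset.sum_sub_distrib, ite_mul, zero_mul, Finset.sum_ite_eq',
      Finset.mem_univ, if_true, one_mul, neg_mul, AddChar.map_zero_eq_one]
    linear_combination (-b) * hk - hab + (χ (-k) : ℂ) * hab'
  simp only [h, Finset.prod_mul_distrib]
  rw [prod_chi_neg n (fun k => 1 - (χ k : ℂ) * b), prod_sub_chi, prod_sub_chi]
  have : a ^ n * b ^ n = 1 := by rw [← mul_pow, hab', one_pow]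
  simp only [one_pow]
  linear_combination -this

lemma det_B :
    (circ n fun d => (if d = 0 then 2 else 0) - (if d = 1 then 1 else 0)
      - (if d = -1 then 1 else 0) + 2).det = 2 * n ^ 3 := by
  rw [det_circ]
  have h : ∀ k : ZMod n, ∑ d, (((if d = 0 then 2 else 0) - (if d = 1 then 1 else 0)
      - (if d = -1 then 1 else 0) + 2) : ℂ) * (χ (d * k) : ℂ)
      = (1 - χ k) * (1 - χ (-k)) + 2 * (if k = 0 then (n : ℂ) else 0) := by
    intro k
    have hk : (χ k : ℂ) * χ (-k) = 1 := by
      rw [← AddChar.map_add_eq_mul]; simp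
    have h := AddChar.sum_mulShift k (ZMod.isPrimitive_stdAddChar n)
    rw [ZMod.card] at h
    simp only [sub_mul, add_mul, Finset.sum_sub_distrib, Finset.sum_add_distrib, ite_mul, zero_mul,
      Finset.sum_ite_eq', Finset.mem_univ, if_true, one_mul, neg_mul, AddChar.map_zero_eq_one,
      ← Finset.mul_sum, h]
    push_cast
    linear_combination -hk
  simp only [h]
  rw [← Finset.mul_prod_erase _ _ (Finset.mem_univ (0 : ZMod n))]
  have h2 : ∏ k ∈ Finset.univ.erase (0 : ZMod n),
      ((1 - χ k) * (1 - χ (-k)) + 2 * (if k = 0 then (n : ℂ) else 0))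
      = (∏ k ∈ Finset.univ.erase (0 : ZMod n), (1 - (χ k : ℂ))) *
        ∏ k ∈ Finset.univ.erase (0 : ZMod n), (1 - (χ (-k) : ℂ)) := by
    rw [← Finset.prod_mul_distrib]
    refine Finset.prod_congr rfl fun k hk => ?_
    simp [(Finset.mem_erase.1 hk).1]
  have h3 : ∏ k ∈ Finset.univ.erase (0 : ZMod n), (1 - (χ (-k) : ℂ))
      = ∏ k ∈ Finset.univ.erase (0 : ZMod n), (1 - (χ k : ℂ)) := by
    refine Finset.prod_nbij' (fun k => -k) (fun k => -k) ?_ ?_ ?_ ?_ ?_ <;> simp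
  rw [h2, h3, prod_one_sub_chi]
  simp
  ring

end circ

lemma cheb (a b : ℂ) (hab : a + b = 4) (hab' : a * b = 1) (n : ℕ) :
    (2 * ((Polynomial.Chebyshev.T ℤ n).eval 2 : ℤ) : ℂ) = a ^ n + b ^ n := by
  induction n using Nat.strong_induction_on with
  | _ n ih =>
    match n with
    | 0 => norm_num
    | 1 => simp [hab]; norm_num
    | n + 2 =>
      have h1 := ih n (by omega)
      have h2 := ih (n + 1) (by omega)
      push_cast at h2 ⊢
      rw [Polynomial.Chebyshev.T_add_two]
      simp only [Polynomial.eval_sub, Polynomial.eval_mul, Polynomial.eval_X,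
        Polynomial.eval_ofNat]
      push_cast
      have : b = 4 - a := by linear_combination hab
      linear_combination 4 * h2 - h1 - (a ^ (n+1) + b ^ (n+1)) * hab + (a ^ n + b ^ n) * hab'

lemma one_ne_zero_zmod {n : ℕ} (hn : 3 ≤ n) : (1 : ZMod n) ≠ 0 := by
  have : Fact (1 < n) := ⟨by omega⟩
  exact one_ne_zero

lemma one_ne_neg_one_zmod {n : ℕ} (hn : 3 ≤ n) : (1 : ZMod n) ≠ -1 := by
  have : Fact (2 < n) := ⟨by omega⟩
  exact (ZMod.neg_one_ne_one).symm

lemma adj_same {n : ℕ} (hn : 3 ≤ n) (i j : ZMod n) :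
    i ≠ j ∧ (j = i + 1 ∨ i = j + 1) ↔ (j - i = 1 ∨ j - i = -1) := by
  have h1 := one_ne_zero_zmod hn
  constructor
  · rintro ⟨-, rfl | rfl⟩
    · left; ring
    · right; ring
  · rintro (h | h)
    · have hj : j = i + 1 := by rw [← h]; ring
      refine ⟨fun hij => h1 ?_, Or.inl hj⟩
      rw [← h, hij, sub_self]
    · have hj : i = j + 1 := by linear_combination -h
      refine ⟨fun hij => h1 ?_, Or.inr hj⟩
      linear_combination h + hij

lemma adj_matrix_prism {n : ℕ} (hn : 3 ≤ n) :
    (∀ i j : ZMod n, (if (genPetersen n 1).Adj (.inl i) (.inl j) then (1 : ℤ) else 0)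
      = (if j - i = 1 then 1 else 0) + (if j - i = -1 then 1 else 0)) ∧
    (∀ i j : ZMod n, (if (genPetersen n 1).Adj (.inr i) (.inr j) then (1 : ℤ) else 0)
      = (if j - i = 1 then 1 else 0) + (if j - i = -1 then 1 else 0)) ∧
    (∀ i j : ZMod n, (if (genPetersen n 1).Adj (.inl i) (.inr j) then (1 : ℤ) else 0)
      = (if j - i = 0 then 1 else 0)) ∧
    (∀ i j : ZMod n, (if (genPetersen n 1).Adj (.inr i) (.inl j) then (1 : ℤ) else 0)
      = (if j - i = 0 then 1 else 0)) := by
  have h2 := one_ne_neg_one_zmod hn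
  have key : ∀ d : ZMod n, (if (d = 1 ∨ d = -1) then (1 : ℤ) else 0)
      = (if d = 1 then 1 else 0) + (if d = -1 then 1 else 0) := by
    intro d
    by_cases hd : d = 1
    · subst hd; simp [h2]
    · simp [hd]
  refine ⟨fun i j => ?_, fun i j => ?_, fun i j => ?_, fun i j => ?_⟩
  · rw [← key]
    refine if_congr ?_ rfl rfl
    rw [← adj_same hn]
    simp [genPetersen, gpRel]
  · rw [← key]
    refine if_congr ?_ rfl rfl
    rw [← adj_same hn]
    simp [genPetersen, gpRel]
  · refine if_congr ?_ rfl rfl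
    simp [genPetersen, gpRel, sub_eq_zero]
  · refine if_congr ?_ rfl rfl
    simp [genPetersen, gpRel, sub_eq_zero, eq_comm]

lemma sum_circ {n : ℕ} [NeZero n] (c : ZMod n) (i : ZMod n) :
    ∑ j : ZMod n, (if j - i = c then (1 : ℤ) else 0) = 1 := by
  simp [sub_eq_iff_eq_add]

lemma lap_prism {n : ℕ} [NeZero n] (hn : 3 ≤ n) :
    ((genPetersen n 1).lapMatrix ℤ + Matrix.of fun _ _ => 1).map (Int.castRingHom ℂ) =
    Matrix.fromBlocks
      (circ n fun d => (if d = 0 then 3 else 0) - (if d = 1 then 1 else 0)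
        - (if d = -1 then 1 else 0) + 1)
      (circ n fun d => 1 - if d = 0 then 1 else 0)
      (circ n fun d => 1 - if d = 0 then 1 else 0)
      (circ n fun d => (if d = 0 then 3 else 0) - (if d = 1 then 1 else 0)
        - (if d = -1 then 1 else 0) + 1) := by
  obtain ⟨h1, h2, h3, h4⟩ := adj_matrix_prism hn
  have hdeg : ∀ v, ((genPetersen n 1).degree v : ℤ) = 3 := by
    intro v
    have hs : ((genPetersen n 1).degree v : ℤ)
        = ∑ w, if (genPetersen n 1).Adj v w then (1 : ℤ) else 0 := by
      rw [Finset.sum_boole, ← SimpleGraph.neighborFinset_eq_filter,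
        SimpleGraph.card_neighborFinset_eq_degree]
    rw [hs, Fintype.sum_sum_type]
    rcases v with i | i
    · simp only [h1, h3, Finset.sum_add_distrib, sum_circ]; norm_num
    · simp only [h2, h4, Finset.sum_add_distrib, sum_circ]; norm_num
  have hL : ∀ v w, (genPetersen n 1).lapMatrix ℤ v w =
      (if v = w then 3 else 0) - if (genPetersen n 1).Adj v w then (1 : ℤ) else 0 := by
    intro v w
    rw [SimpleGraph.lapMatrix, Matrix.sub_apply, SimpleGraph.adjMatrix_apply,
      SimpleGraph.degMatrix, Matrix.diagonal_apply, hdeg]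
  ext (i | i) (j | j)
  · simp only [Matrix.map_apply, Matrix.add_apply, hL, h1, Matrix.fromBlocks_apply₁₁, circ,
      Matrix.of_apply, Sum.inl.injEq, sub_eq_zero, @eq_comm _ j i]
    push_cast [eq_intCast]
    ring
  · simp only [Matrix.map_apply, Matrix.add_apply, hL, h3, Matrix.fromBlocks_apply₁₂, circ,
      Matrix.of_apply, reduceCtorEq, if_false]
    push_cast [eq_intCast]
    ring
  · simp only [Matrix.map_apply, Matrix.add_apply, hL, h4, Matrix.fromBlocks_apply₂₁, circ,
      Matrix.of_apply, reduceCtorEq, if_false]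
    push_cast [eq_intCast]
    ring
  · simp only [Matrix.map_apply, Matrix.add_apply, hL, h2, Matrix.fromBlocks_apply₂₂, circ,
      Matrix.of_apply, Sum.inr.injEq, sub_eq_zero, @eq_comm _ j i]
    push_cast [eq_intCast]
    ring

lemma exists_ab : ∃ a b : ℂ, a + b = 4 ∧ a * b = 1 := by
  refine ⟨2 + (Real.sqrt 3 : ℂ), 2 - (Real.sqrt 3 : ℂ), by ring, ?_⟩
  have h : (Real.sqrt 3 : ℂ) ^ 2 = 3 := by
    rw [← Complex.ofReal_pow, Real.sq_sqrt (by norm_num)]; norm_num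
  linear_combination -h

end PrismAux

/-- The number of spanning trees of the prism graph `GP(n,1)` is
`n·(T_n(2) − 1)`. -/
theorem spanning_trees_prism (n : ℕ) (hn : 3 ≤ n) :
    (numSpanningTrees (genPetersen n 1) : ℤ) =
      n * ((Polynomial.Chebyshev.T ℤ n).eval 2 - 1) := by
  have : NeZero n := ⟨by omega⟩
  obtain ⟨a, b, hab, hab'⟩ := PrismAux.exists_ab
  have h1 := PrismAux.det_lap_add_ones (genPetersen n 1) (Sum.inl 0)
  rw [PrismAux.matrix_tree] at h1
  have h2 := congrArg (Int.castRingHom ℂ) h1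
  rw [RingHom.map_det, RingHom.mapMatrix_apply, PrismAux.lap_prism hn,
    PrismAux.det_fromBlocks_sym] at h2
  have hA := PrismAux.det_A n a b hab hab'
  have hB := PrismAux.det_B n
  have hc := PrismAux.cheb a b hab hab' n
  rw [← hc] at hA
  have e1 : ∀ c c' : ZMod n → ℂ, PrismAux.circ n c + PrismAux.circ n c'
    = PrismAux.circ n (fun d => c d + c' d) := fun _ _ => rfl
  have e2 : ∀ c c' : ZMod n → ℂ, PrismAux.circ n c - PrismAux.circ n c'
    = PrismAux.circ n (fun d => c d - c' d) := fun _ _ => rfl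
  rw [e1, e2] at h2
  have f1 : (fun d : ZMod n => ((if d = 0 then 3 else 0) - (if d = 1 then 1 else 0)
      - (if d = -1 then 1 else 0) + 1 + (1 - if d = 0 then 1 else 0) : ℂ)) =
      fun d => (if d = 0 then 2 else 0) - (if d = 1 then 1 else 0)
      - (if d = -1 then 1 else 0) + 2 := by
    funext d
    by_cases hd : d = 0
    · simp only [hd, if_true]; ring
    · simp only [hd, if_false]; ring
  have f2 : (fun d : ZMod n => ((if d = 0 then 3 else 0) - (if d = 1 then 1 else 0)
      - (if d = -1 then 1 else 0) + 1 - (1 - if d = 0 then 1 else 0) : ℂ)) =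
      fun d => (if d = 0 then 4 else 0) - (if d = 1 then 1 else 0)
      - (if d = -1 then 1 else 0) := by
    funext d
    by_cases hd : d = 0
    · simp only [hd, if_true]; ring
    · simp only [hd, if_false]; ring
  rw [f1, f2, hA, hB] at h2
  simp only [Fintype.card_sum, ZMod.card, eq_intCast] at h2
  push_cast at h2
  have hn0 : (n : ℂ) ≠ 0 := Nat.cast_ne_zero.2 (NeZero.ne n)
  have h3 : (numSpanningTrees (genPetersen n 1) : ℂ) =
      n * (((Polynomial.Chebyshev.T ℤ n).eval 2 : ℤ) - 1) := by
    apply mul_left_cancel₀ (pow_ne_zero 2 hn0)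
    linear_combination -h2 / 4
  exact_mod_cast h3
end

section
/- Define the integer sequence a : ℕ → ℤ by a(0) = 0, a(1) = 1, a(2) = 1, a(3) = 5, and a(n+4) = a(n+3) + 3a(n+2) − a(n+1) − a(n) for all n ≥ 0. Then for every integer n ≥ 5, τ(GP(n,2)) = n · a(n)². -/
open Polynomial

section MatrixTree

variable {V : Type*} [Fintype V] [DecidableEq V]

/-- Matrix with rows `e_v - e_{g v}` (or `e_v` when `g v = none`). -/
def parMat (g : V → Option V) : Matrix V V ℝ :=
  Matrix.of fun v w => (if w = v then 1 else 0) - (if g v = some w then 1 else 0)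

/-- The step relation of a partial function. -/
def stepRel (g : V → Option V) : V → V → Prop := fun w v => g v = some w

lemma parMat_apply (g : V → Option V) (v w : V) :
    parMat g v w = (if w = v then 1 else 0) - (if g v = some w then 1 else 0) := rfl

lemma det_parMat_of_wf (g : V → Option V) (h : WellFounded (stepRel g)) :
    (parMat g).det = 1 := by
  have : IsWellFounded V (stepRel g) := ⟨h⟩
  have hself : ∀ v, g v ≠ some v := fun v hv => h.irrefl.irrefl v hv
  have hb : (parMat g).BlockTriangular (fun v => OrderDual.toDual (IsWellFounded.rank (stepRel g) v)) := by
    intro i j hij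
    rw [OrderDual.toDual_lt_toDual] at hij
    rw [parMat_apply, if_neg, if_neg]
    · simp
    · intro hg
      exact absurd (IsWellFounded.rank_lt_of_rel (r := stepRel g) hg) (not_lt.2 hij.le)
    · rintro rfl
      exact lt_irrefl _ hij
  rw [hb.det]
  apply Finset.prod_eq_one
  intro a _
  have : (parMat g).toSquareBlock (fun v => OrderDual.toDual (IsWellFounded.rank (stepRel g) v)) a = 1 := by
    ext ⟨i, hi⟩ ⟨j, hj⟩
    rw [Matrix.toSquareBlock_def, Matrix.of_apply, parMat_apply, Matrix.one_apply, if_neg (c := g i = some j)]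
    · simp [eq_comm]
    · intro hg
      have := IsWellFounded.rank_lt_of_rel (r := stepRel g) hg
      have h2 := hi.trans hj.symm
      simp only [OrderDual.toDual_inj] at h2
      exact absurd this (by rw [h2]; exact lt_irrefl _)
  rw [this, Matrix.det_one]

lemma det_parMat_of_not_wf (g : V → Option V) (h : ¬ WellFounded (stepRel g)) :
    (parMat g).det = 0 := by
  classical
  rw [← Matrix.exists_mulVec_eq_zero_iff]
  refine ⟨fun v => if Acc (stepRel g) v then 0 else 1, ?_, ?_⟩
  · intro h0
    apply h
    constructor
    intro v
    by_contra hv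
    have := congrFun h0 v
    simp [hv] at this
  · ext v
    simp only [Matrix.mulVec, dotProduct, parMat_apply, sub_mul, Finset.sum_sub_distrib, Pi.zero_apply]
    cases hg : g v with
    | none =>
      have : Acc (stepRel g) v := ⟨_, fun w hw => by simp [stepRel, hg] at hw⟩
      rw [Finset.sum_eq_single v (by intros; simp_all) (by simp)]
      simp [this]
    | some w =>
      have : Acc (stepRel g) v ↔ Acc (stepRel g) w := by
        constructor
        · intro h; exact h.inv hg
        · intro h
          refine ⟨_, fun x hx => ?_⟩
          have : w = x := by simpa [stepRel, hg] using hx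
          exact this ▸ h
      rw [Finset.sum_eq_single v (by intros; simp_all) (by simp),
        Finset.sum_eq_single w (by rintro b - hb; simp [hb.symm]) (by simp)]
      simp [this]

open Classical in
/-- The allowed steps out of `v`. -/
noncomputable def allowed (G : SimpleGraph V) (r : V) (v : V) : Finset (Option V) :=
  Finset.univ.filter fun o => (∀ w, o = some w → G.Adj v w) ∧ (o = none → v = r)

/-- The grounded Laplacian, presented row by row. -/
noncomputable def groundLap (G : SimpleGraph V) (r : V) : Matrix V V ℝ :=
  Matrix.of fun v => ∑ o ∈ allowed G r v,
    fun w => (if w = v then (1 : ℝ) else 0) - (if o = some w then 1 else 0)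

open Classical in
lemma det_groundLap (G : SimpleGraph V) (r : V) :
    (groundLap G r).det =
      Nat.card {g : V → Option V // (∀ v, g v ∈ allowed G r v) ∧ WellFounded (stepRel g)} := by
  have h := (Matrix.detRowAlternating (n := V) (R := ℝ)).toMultilinearMap.map_sum_finset
    (fun v (o : Option V) => fun w => (if w = v then (1 : ℝ) else 0) - (if o = some w then 1 else 0))
    (fun v => allowed G r v)
  have h' : (groundLap G r).det = ∑ g ∈ Fintype.piFinset (allowed G r), (parMat g).det := h
  rw [h', Finset.sum_congr rfl (g := fun g => if WellFounded (stepRel g) then (1:ℝ) else 0)]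
  · rw [Finset.sum_boole, Nat.card_eq_fintype_card, Fintype.card_subtype]
    congr 2
    ext g
    simp [Fintype.mem_piFinset]
  · intro g _
    split_ifs with hw
    · exact det_parMat_of_wf g hw
    · exact det_parMat_of_not_wf g hw

/-- The graph of a parent function. -/
def parGraph (g : V → Option V) : SimpleGraph V := SimpleGraph.fromRel fun v w => g v = some w

lemma parGraph_adj_of {g : V → Option V} (h : WellFounded (stepRel g)) {v w : V} (hg : g v = some w) :
    (parGraph g).Adj v w := by
  refine (SimpleGraph.fromRel_adj _ _ _).2 ⟨?_, Or.inl hg⟩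
  rintro rfl
  exact h.irrefl.irrefl v hg

lemma mem_allowed {G : SimpleGraph V} {r v : V} {o : Option V} : o ∈ allowed G r v ↔
    (∀ w, o = some w → G.Adj v w) ∧ (o = none → v = r) := by simp [allowed]

lemma root_none {G : SimpleGraph V} {r : V} {g : V → Option V} (ha : ∀ v, g v ∈ allowed G r v)
    (h : WellFounded (stepRel g)) : g r = none := by
  obtain ⟨v, -, hv⟩ := h.has_min Set.univ ⟨r, trivial⟩
  cases hg : g v with
  | none => rw [← (mem_allowed.1 (ha v)).2 hg, hg]
  | some w => exact absurd hg (hv w trivial)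

lemma parGraph_isTree {G : SimpleGraph V} {r : V} {g : V → Option V} (ha : ∀ v, g v ∈ allowed G r v)
    (h : WellFounded (stepRel g)) : (parGraph g).IsTree := by
  have hr := root_none ha h
  have hreach : ∀ v, (parGraph g).Reachable v r := by
    intro v
    induction v using h.induction with
    | _ v ih =>
      cases hg : g v with
      | none => rw [(mem_allowed.1 (ha v)).2 hg]
      | some w => exact (parGraph_adj_of h hg).reachable.trans (ih w hg)
  have hconn : (parGraph g).Connected :=
    (SimpleGraph.connected_iff _).2 ⟨fun v w => (hreach v).trans (hreach w).symm, ⟨r⟩⟩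
  rw [SimpleGraph.isTree_iff_connected_and_card]
  refine ⟨hconn, le_antisymm ?_ hconn.card_vert_le_card_edgeSet_add_one⟩
  have hsub : (parGraph g).edgeSet ⊆
      ((Finset.univ.erase r).image fun v => s(v, (g v).getD r) : Finset (Sym2 V)) := by
    intro e he
    induction e with
    | _ a b =>
      rw [SimpleGraph.mem_edgeSet, parGraph, SimpleGraph.fromRel_adj] at he
      simp only [Finset.coe_image, Set.mem_image, Finset.mem_coe, Finset.mem_erase, Finset.mem_univ, and_true]
      rcases he.2 with hg | hg
      · refine ⟨a, ?_, by simp [hg]⟩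
        rintro rfl
        simp [hr] at hg
      · refine ⟨b, ?_, by simp [hg, Sym2.eq_swap]⟩
        rintro rfl
        simp [hr] at hg
  have h1 := Set.ncard_le_ncard hsub (Finset.finite_toSet _)
  rw [Set.ncard_coe_finset] at h1
  have h2 := h1.trans Finset.card_image_le
  rw [Finset.card_erase_of_mem (Finset.mem_univ r), Finset.card_univ] at h2
  have h3 : 0 < Fintype.card V := Fintype.card_pos_iff.2 ⟨r⟩
  have h4 : Nat.card (parGraph g).edgeSet = (parGraph g).edgeSet.ncard := rfl
  rw [h4, Nat.card_eq_fintype_card]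
  omega

lemma parGraph_le {G : SimpleGraph V} {r : V} {g : V → Option V} (ha : ∀ v, g v ∈ allowed G r v) :
    parGraph g ≤ G := by
  intro a b hab
  rw [parGraph, SimpleGraph.fromRel_adj] at hab
  rcases hab.2 with hg | hg
  · exact (mem_allowed.1 (ha a)).1 b hg
  · exact ((mem_allowed.1 (ha b)).1 a hg).symm

lemma parGraph_inj {G : SimpleGraph V} {r : V} {g g' : V → Option V} (ha : ∀ v, g v ∈ allowed G r v)
    (h : WellFounded (stepRel g)) (ha' : ∀ v, g' v ∈ allowed G r v)
    (h' : WellFounded (stepRel g')) (he : parGraph g = parGraph g') : g = g' := by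
  funext v
  induction v using h.induction with
  | _ v ih =>
    cases hg : g v with
    | none =>
      rw [(mem_allowed.1 (ha v)).2 hg, root_none ha' h']
    | some w =>
      have hadj := parGraph_adj_of h hg
      rw [he, parGraph, SimpleGraph.fromRel_adj] at hadj
      rcases hadj.2 with h1 | h1
      · exact h1.symm
      · have h2 := ih w hg
        rw [h1] at h2
        exact absurd hg (h.asymmetric _ _ h2)

lemma exists_parGraph {H G : SimpleGraph V} (hHG : H ≤ G) (hH : H.IsTree) (r : V) :
    ∃ g : V → Option V, (∀ v, g v ∈ allowed G r v) ∧ WellFounded (stepRel g) ∧ parGraph g = H := by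
  classical
  have hex : ∀ v, v ≠ r → ∃ w, H.Adj v w ∧ H.dist w r < H.dist v r := by
    intro v hv
    obtain ⟨p, hp⟩ := hH.1.exists_walk_length_eq_dist v r
    cases p with
    | nil => exact absurd rfl hv
    | cons hadj q =>
      refine ⟨_, hadj, ?_⟩
      have := SimpleGraph.dist_le q
      simp only [SimpleGraph.Walk.length_cons] at hp
      omega
  choose! p hp1 hp2 using hex
  set g : V → Option V := fun v => if v = r then none else some (p v) with hgdef
  have hgs : ∀ v w, g v = some w → v ≠ r ∧ p v = w := by
    intro v w hvw
    by_cases hv : v = r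
    · simp [hgdef, hv] at hvw
    · exact ⟨hv, by simpa [hgdef, hv] using hvw⟩
  have haH : ∀ v, g v ∈ allowed H r v := by
    intro v
    rw [mem_allowed]
    refine ⟨fun w hw => ?_, fun hn => ?_⟩
    · obtain ⟨h1, rfl⟩ := hgs v w hw
      exact hp1 v h1
    · by_contra hv
      simp [hgdef, hv] at hn
  have ha : ∀ v, g v ∈ allowed G r v := fun v =>
    mem_allowed.2 ⟨fun w hw => hHG ((mem_allowed.1 (haH v)).1 w hw), (mem_allowed.1 (haH v)).2⟩
  have hwf : WellFounded (stepRel g) := by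
    refine Subrelation.wf (r := InvImage (· < ·) fun v => H.dist v r) ?_ (InvImage.wf _ wellFounded_lt)
    intro w v hw
    obtain ⟨h1, rfl⟩ := hgs v w hw
    exact hp2 v h1
  refine ⟨g, ha, hwf, ?_⟩
  exact ((SimpleGraph.isTree_iff_minimal_connected.1 hH).eq_of_le
    (parGraph_isTree haH hwf).1 (parGraph_le haH))

lemma numSpanningTrees_eq_det (G : SimpleGraph V) (r : V) :
    (numSpanningTrees G : ℝ) = (groundLap G r).det := by
  rw [det_groundLap, numSpanningTrees]
  congr 1
  symm
  refine Nat.card_congr (Equiv.ofBijective (fun g =>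
    ⟨SimpleGraph.toSubgraph (parGraph g.1) (parGraph_le g.2.1), SimpleGraph.toSubgraph.isSpanning _ _, ?_⟩) ⟨?_, ?_⟩)
  · rw [← ((SimpleGraph.Subgraph.spanningCoeEquivCoeOfSpanning _
      (SimpleGraph.toSubgraph.isSpanning _ _))).isTree_iff]
    exact parGraph_isTree g.2.1 g.2.2
  · rintro ⟨g, h1, h2⟩ ⟨g', h1', h2'⟩ he
    have he1 := congrArg (fun H => H.1.spanningCoe) he
    exact Subtype.ext (parGraph_inj h1 h2 h1' h2' he1)
  · rintro ⟨H, hs, ht⟩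
    have ht' : H.spanningCoe.IsTree := (H.spanningCoeEquivCoeOfSpanning hs).isTree_iff.2 ht
    obtain ⟨g, h1, h2, h3⟩ := exists_parGraph H.spanningCoe_le ht' r
    refine ⟨⟨g, h1, h2⟩, Subtype.ext ?_⟩
    apply SimpleGraph.Subgraph.ext
    · exact (SimpleGraph.Subgraph.isSpanning_iff.1 hs).symm
    · ext a b
      change (parGraph g).Adj a b ↔ _
      rw [h3]; rfl

end MatrixTree

section Circulant

variable (n : ℕ) [NeZero n]

/-- The cyclic shift matrix. -/
def shiftS : Matrix (ZMod n) (ZMod n) ℝ := Matrix.of fun i j => if j = i + 1 then 1 else 0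

/-- The all-ones matrix. -/
def onesJ : Matrix (ZMod n) (ZMod n) ℝ := Matrix.of fun _ _ => 1

lemma shiftS_pow (k : ℕ) (i j : ZMod n) : (shiftS n ^ k) i j = if j = i + k then 1 else 0 := by
  induction k generalizing j with
  | zero => simp [Matrix.one_apply, eq_comm]
  | succ k ih =>
    rw [pow_succ, Matrix.mul_apply]
    simp only [ih]
    simp only [shiftS, Matrix.of_apply, ite_mul, one_mul, zero_mul]
    simp [add_assoc]

lemma shiftS_mul_T : shiftS n * (shiftS n).transpose = 1 := by
  ext i j
  rw [Matrix.mul_apply]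
  simp [shiftS, Matrix.one_apply, eq_comm]

lemma shiftS_T_mul : (shiftS n).transpose * shiftS n = 1 := by
  exact mul_eq_one_comm.1 (shiftS_mul_T n)

lemma S_mul_J : shiftS n * onesJ n = onesJ n := by
  ext i j
  rw [Matrix.mul_apply]
  simp [shiftS, onesJ]

lemma J_transpose : (onesJ n).transpose = onesJ n := rfl

lemma T_mul_J : (shiftS n).transpose * onesJ n = onesJ n := by
  conv_lhs => rw [← S_mul_J, ← mul_assoc, shiftS_T_mul, one_mul]

lemma J_mul_T : onesJ n * (shiftS n).transpose = onesJ n := by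
  have := congrArg Matrix.transpose (S_mul_J n)
  simpa [Matrix.transpose_mul, J_transpose] using this

lemma J_mul_S : onesJ n * shiftS n = onesJ n := by
  have := congrArg Matrix.transpose (T_mul_J n)
  simpa [Matrix.transpose_mul, J_transpose] using this

lemma J_mul_J : onesJ n * onesJ n = (n : ℝ) • onesJ n := by
  ext i j
  rw [Matrix.mul_apply]
  simp [onesJ, ZMod.card]

lemma charpoly_shiftS : (shiftS n).charpoly = X ^ n - 1 := by
  have hn : 0 < n := Nat.pos_of_ne_zero (NeZero.ne n)
  rw [← sub_eq_zero]
  set q := (shiftS n).charpoly - (X ^ n - 1) with hq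
  have hm : ((X : ℝ[X]) ^ n - 1).Monic := by
    simpa using monic_X_pow_sub_C (1 : ℝ) hn.ne'
  have hdeg : q.degree < n := by
    have hd : (shiftS n).charpoly.degree = n := by
      rw [Matrix.charpoly_degree_eq_dim, ZMod.card]
    have hd2 : ((X : ℝ[X]) ^ n - 1).degree = n := by
      simpa using degree_X_pow_sub_C hn (1 : ℝ)
    have := Polynomial.degree_sub_lt_left (hd.trans hd2.symm) (Matrix.charpoly_monic _).ne_zero
      (by rw [(Matrix.charpoly_monic _).leadingCoeff, hm.leadingCoeff])
    rwa [hd] at this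
  have haev : aeval (shiftS n) q = 0 := by
    rw [hq, map_sub, Matrix.aeval_self_charpoly]
    have : shiftS n ^ n = 1 := by
      ext i j
      rw [shiftS_pow]
      simp [Matrix.one_apply, eq_comm]
    simp [this]
  by_contra hne
  have hnd : q.natDegree < n := (Polynomial.natDegree_lt_iff_degree_lt hne).2 hdeg
  apply hne
  ext k
  by_cases hk : k < n
  · rw [Polynomial.aeval_eq_sum_range' hnd] at haev
    have h0 := congrFun (congrFun haev 0) (k : ZMod n)
    rw [Matrix.sum_apply, Finset.sum_eq_single k] at h0
    · simpa [shiftS_pow] using h0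
    · intro b hb hbk
      rw [Matrix.smul_apply, shiftS_pow, if_neg, smul_zero]
      rw [zero_add, ZMod.natCast_eq_natCast_iff']
      rw [Nat.mod_eq_of_lt hk, Nat.mod_eq_of_lt (Finset.mem_range.1 hb)]
      exact fun h => hbk h.symm
    · intro h; exact absurd (Finset.mem_range.2 hk) h
  · rw [Polynomial.coeff_eq_zero_of_natDegree_lt (by omega)]; simp

lemma det_x_sub_S (x : ℝ) : (x • (1 : Matrix (ZMod n) (ZMod n) ℝ) - shiftS n).det = x ^ n - 1 := by
  have h := Matrix.eval_charpoly (shiftS n) x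
  rw [charpoly_shiftS] at h
  rw [Matrix.smul_one_eq_diagonal]
  simpa [Matrix.scalar_apply] using h.symm

lemma det_one_add_J (c : ℝ) : (1 + c • onesJ n).det = 1 + c * n := by
  have h := Matrix.det_one_add_replicateCol_mul_replicateRow (ι := Unit) (fun _ : ZMod n => c)
    (fun _ : ZMod n => (1 : ℝ))
  have h2 : Matrix.replicateCol Unit (fun _ : ZMod n => c) *
      Matrix.replicateRow Unit (fun _ : ZMod n => (1 : ℝ)) = c • onesJ n := by
    ext i j
    simp [Matrix.mul_apply, onesJ]
  rw [h2] at h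
  rw [h]
  simp [dotProduct, ZMod.card, mul_comm]

lemma det_one_sub_S (α : ℝ) : (1 - shiftS n + α • onesJ n).det = α * n ^ 2 := by
  have key : (shiftS n - α • onesJ n).charpoly =
      (∑ i ∈ Finset.range n, X ^ i) * (X - C (1 - α * n)) := by
    apply Polynomial.eq_of_infinite_eval_eq
    refine Set.Infinite.mono ?_ (Set.Ioi_infinite (1 : ℝ))
    intro x hx
    have hx1 : x - 1 ≠ 0 := sub_ne_zero.2 (ne_of_gt hx)
    simp only [Set.mem_ofPred_eq]
    rw [Matrix.eval_charpoly]
    have hmat : Matrix.scalar (ZMod n) x - (shiftS n - α • onesJ n) =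
        (x • (1 : Matrix (ZMod n) (ZMod n) ℝ) - shiftS n) * (1 + (α / (x - 1)) • onesJ n) := by
      rw [mul_add, mul_one, mul_smul_comm, sub_mul, S_mul_J, smul_mul_assoc, one_mul,
        Matrix.scalar_apply, ← Matrix.smul_one_eq_diagonal]
      have : x • onesJ n - onesJ n = (x - 1) • onesJ n := by rw [sub_smul, one_smul]
      rw [this, smul_smul, div_mul_cancel₀ _ hx1]
      abel
    rw [hmat, Matrix.det_mul, det_x_sub_S, det_one_add_J]
    have hg := mul_geom_sum x n
    simp only [eval_mul, eval_finsetSum, eval_pow, eval_X, eval_sub, eval_C]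
    rw [← hg]
    field_simp
    ring
  have h1 := Matrix.eval_charpoly (shiftS n - α • onesJ n) 1
  rw [key] at h1
  have h2 : Matrix.scalar (ZMod n) (1 : ℝ) - (shiftS n - α • onesJ n) = 1 - shiftS n + α • onesJ n := by
    rw [map_one]; abel
  rw [h2] at h1
  rw [← h1]
  simp [eval_finsetSum]
  ring

lemma det_blocks (A D : Matrix (ZMod n) (ZMod n) ℝ) :
    (Matrix.fromBlocks A (-1) (-1) D).det = (D * A - 1).det := by
  have h1 : Matrix.fromBlocks A (-1) (-1) D * (Matrix.fromBlocks 1 1 0 1 *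
      Matrix.fromBlocks 1 0 (-1) 1 * Matrix.fromBlocks 1 1 0 1) = Matrix.fromBlocks 1 A (-D) (-1) := by
    simp [Matrix.fromBlocks_multiply]
  have h2 := congrArg Matrix.det h1
  rw [Matrix.det_fromBlocks_one₁₁] at h2
  simp only [Matrix.det_mul, Matrix.det_fromBlocks_zero₂₁, Matrix.det_fromBlocks_zero₁₂, Matrix.det_one,
    mul_one] at h2
  rw [h2]
  congr 1
  rw [neg_mul, sub_neg_eq_add]; abel

/-- The factor `7 + w - w²`. -/
noncomputable def facN : Matrix (ZMod n) (ZMod n) ℝ :=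
  (7 : ℝ) • 1 + (shiftS n + (shiftS n).transpose) -
    (shiftS n + (shiftS n).transpose) * (shiftS n + (shiftS n).transpose)

lemma big_factor : ((3 : ℝ) • 1 - shiftS n * shiftS n - (shiftS n).transpose * (shiftS n).transpose) *
      ((3 : ℝ) • 1 - shiftS n - (shiftS n).transpose + onesJ n) - 1 =
    (1 - shiftS n + (1 : ℝ) • onesJ n) *
      ((1 - (shiftS n).transpose + (1 / (5 * n) : ℝ) • onesJ n) * facN n) := by
  have hn : (n : ℝ) ≠ 0 := Nat.cast_ne_zero.2 (NeZero.ne n)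
  have e1 := shiftS_mul_T n
  have e2 := shiftS_T_mul n
  have e3 := S_mul_J n
  have e4 := T_mul_J n
  have e5 := J_mul_S n
  have e6 := J_mul_T n
  have e7 := J_mul_J n
  unfold facN
  generalize (shiftS n).transpose = T at *
  generalize shiftS n = S at *
  generalize onesJ n = J at *
  have a1 : ∀ M, S * (T * M) = M := fun M => by rw [← mul_assoc, e1, one_mul]
  have a2 : ∀ M, T * (S * M) = M := fun M => by rw [← mul_assoc, e2, one_mul]
  have a5 : ∀ M, J * (S * M) = J * M := fun M => by rw [← mul_assoc, e5]
  have a6 : ∀ M, J * (T * M) = J * M := fun M => by rw [← mul_assoc, e6]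
  have a7 : ∀ M, J * (J * M) = (n : ℝ) • (J * M) := fun M => by rw [← mul_assoc, e7, smul_mul_assoc]
  simp only [mul_add, add_mul, mul_sub, sub_mul, mul_assoc, e1, e2, e3, e4, e5, e6, e7, a1, a2, a5, a6, a7,
    smul_mul_assoc, mul_smul_comm, one_mul, mul_one, smul_smul, smul_add, smul_sub]
  match_scalars <;> field_simp <;> ring

lemma det_pos_fac (r : ℝ) (hr : r ≠ 0) :
    ((r + 1 / r) • (1 : Matrix (ZMod n) (ZMod n) ℝ) - (shiftS n + (shiftS n).transpose)).det =
      (r ^ n - 1) ^ 2 / r ^ n := by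
  have h : (r + 1 / r) • (1 : Matrix (ZMod n) (ZMod n) ℝ) - (shiftS n + (shiftS n).transpose) =
      (1 / r) • ((r • 1 - shiftS n) * (r • (1 : Matrix (ZMod n) (ZMod n) ℝ) - shiftS n).transpose) := by
    simp only [Matrix.transpose_sub, Matrix.transpose_smul, Matrix.transpose_one, mul_sub, sub_mul,
      smul_mul_assoc, mul_smul_comm, one_mul, mul_one, shiftS_mul_T, smul_sub, smul_smul]
    match_scalars <;> field_simp
    ring
  rw [h, Matrix.det_smul, Matrix.det_mul, Matrix.det_transpose, det_x_sub_S, ZMod.card, one_div, inv_pow]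
  field_simp

lemma det_facN (r q : ℝ) (hr : r ≠ 0) (hq : q ≠ 0) (h1 : (r + 1 / r) - (q + 1 / q) = 1)
    (h2 : (r + 1 / r) * (q + 1 / q) = 7) :
    (facN n).det = ((r ^ n - 1) * ((-q) ^ n - 1)) ^ 2 / (r * q) ^ n := by
  have h : facN n = ((r + 1 / r) • (1 : Matrix (ZMod n) (ZMod n) ℝ) - (shiftS n + (shiftS n).transpose)) *
      (-((-q + 1 / (-q)) • (1 : Matrix (ZMod n) (ZMod n) ℝ) - (shiftS n + (shiftS n).transpose))) := by
    rw [facN]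
    generalize shiftS n + (shiftS n).transpose = W
    have hq2 : -q + 1 / (-q) = - (q + 1 / q) := by field_simp; ring
    rw [hq2]
    generalize q + 1 / q = Q at *
    obtain rfl : Q = (r + 1 / r) - 1 := by linarith
    generalize r + 1 / r = R at *
    simp only [mul_neg, mul_sub, sub_mul, smul_mul_assoc, mul_smul_comm, one_mul, mul_one, smul_smul]
    match_scalars <;> linarith
  rw [h, Matrix.det_mul, Matrix.det_neg, det_pos_fac n r hr, det_pos_fac n (-q) (neg_ne_zero.2 hq), ZMod.card]
  have : (-q) ^ n = (-1) ^ n * q ^ n := by rw [neg_pow]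
  have hs : ((-1 : ℝ) ^ n) * (-1) ^ n = 1 := by rw [← mul_pow]; simp
  have h3 : (-1 : ℝ) ^ n * (((-q) ^ n - 1) ^ 2 / (-q) ^ n) = ((-q) ^ n - 1) ^ 2 / q ^ n := by
    rw [neg_pow q n]
    have h0 : ((-1 : ℝ) ^ n) ≠ 0 := pow_ne_zero _ (by norm_num)
    have h4 : q ^ n ≠ 0 := pow_ne_zero _ hq
    field_simp
  rw [h3, mul_pow, mul_pow r q]
  have h4 : q ^ n ≠ 0 := pow_ne_zero _ hq
  have h5 : r ^ n ≠ 0 := pow_ne_zero _ hr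
  field_simp

end Circulant

section Ground

variable {V : Type*} [Fintype V] [DecidableEq V]

lemma groundLap_eq (G : SimpleGraph V) [DecidableRel G.Adj] (r : V) :
    groundLap G r = G.lapMatrix ℝ + Matrix.vecMulVec (Pi.single r 1) (Pi.single r 1) := by
  classical
  ext v w
  have h : groundLap G r v w = ∑ o ∈ allowed G r v,
      ((if w = v then (1 : ℝ) else 0) - (if o = some w then 1 else 0)) := by
    simp [groundLap, Finset.sum_apply]
  rw [h, allowed, Finset.sum_filter, Fintype.sum_option]
  simp only [SimpleGraph.lapMatrix, SimpleGraph.degMatrix, Matrix.add_apply, Matrix.sub_apply,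
    Matrix.diagonal_apply, SimpleGraph.adjMatrix_apply, Matrix.vecMulVec_apply, Pi.single_apply]
  have h2 : (∑ x, if G.Adj v x then ((if w = v then (1 : ℝ) else 0) - if x = w then 1 else 0) else 0) =
      (if v = w then (G.degree v : ℝ) else 0) - if G.Adj v w then 1 else 0 := by
    have : ∀ x, (if G.Adj v x then ((if w = v then (1 : ℝ) else 0) - if x = w then 1 else 0) else 0) =
      (if G.Adj v x then (if w = v then (1 : ℝ) else 0) else 0) -
        (if x = w then (if G.Adj v x then 1 else 0) else 0) := by
      intro x; split_ifs <;> simp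
    simp only [this, Finset.sum_sub_distrib]
    congr 1
    · rw [← Finset.sum_filter, Finset.sum_const, ← SimpleGraph.neighborFinset_eq_filter,
        SimpleGraph.card_neighborFinset_eq_degree]
      by_cases hvw : v = w <;> simp [hvw, eq_comm]
    · simp
  rw [Finset.sum_congr rfl (g := fun x => if G.Adj v x then
    ((if w = v then (1 : ℝ) else 0) - if x = w then 1 else 0) else 0)
    (by intro x _; by_cases hx : G.Adj v x <;> simp [hx])]
  rw [h2]
  by_cases hv : v = r
  · by_cases hw : w = r
    · simp [hv, hw, add_comm]
    · simp [hv, hw, add_comm]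
  · simp [hv]

lemma det_lap_add_s12 (G : SimpleGraph V) [DecidableRel G.Adj] (r : V) (u : V → ℝ) :
    (G.lapMatrix ℝ + Matrix.vecMulVec u u).det = (∑ v, u v) ^ 2 * (groundLap G r).det := by
  set y : V → ℝ := u - Pi.single r 1 with hy
  set e : V → ℝ := Pi.single r 1 with he
  set o : V → ℝ := fun _ => 1 with ho
  set Q : Matrix V V ℝ := 1 + Matrix.vecMulVec y o with hQ
  have hdet : Q.det = ∑ v, u v := by
    have := Matrix.det_one_add_replicateCol_mul_replicateRow (ι := Unit) y o
    rw [← Matrix.vecMulVec_eq] at this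
    rw [hQ, this]
    simp [dotProduct, hy, ho, he, Finset.sum_sub_distrib]
  have hL1 : G.lapMatrix ℝ * Matrix.vecMulVec o y = 0 := by
    rw [Matrix.mul_vecMulVec, SimpleGraph.lapMatrix_mulVec_const_eq_zero]
    ext; simp [Matrix.vecMulVec]
  have hL2 : Matrix.vecMulVec y o * G.lapMatrix ℝ = 0 := by
    have := congrArg Matrix.transpose hL1
    rwa [Matrix.transpose_mul, G.isSymm_lapMatrix ℝ, Matrix.transpose_vecMulVec, Matrix.transpose_zero] at this
  have hQT : Q.transpose = 1 + Matrix.vecMulVec o y := by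
    rw [hQ, Matrix.transpose_add, Matrix.transpose_one, Matrix.transpose_vecMulVec]
  have hQe : Q.mulVec e = u := by
    rw [hQ, Matrix.add_mulVec, Matrix.one_mulVec, Matrix.vecMulVec_mulVec]
    ext v
    simp [hy, he, ho, dotProduct]
  have key : G.lapMatrix ℝ + Matrix.vecMulVec u u = Q * groundLap G r * Q.transpose := by
    rw [groundLap_eq, mul_add, add_mul, Matrix.mul_vecMulVec, Matrix.vecMulVec_mul, Matrix.vecMul_transpose,
      hQe]
    congr 1
    rw [hQT, hQ, add_mul, one_mul, hL2, add_zero, mul_add, mul_one, hL1, add_zero]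
  rw [key, Matrix.det_mul, Matrix.det_mul, Matrix.det_transpose, hdet]
  ring

end Ground

lemma lap_genPetersen (n : ℕ) [NeZero n] (hn : 5 ≤ n) :
    (genPetersen n 2).lapMatrix ℝ = Matrix.fromBlocks
      ((3 : ℝ) • 1 - shiftS n - (shiftS n).transpose) (-1) (-1)
      ((3 : ℝ) • 1 - shiftS n * shiftS n - (shiftS n).transpose * (shiftS n).transpose) := by
  have hc : ∀ m : ℕ, 0 < m → m < 5 → (m : ZMod n) ≠ 0 := by
    intro m h1 h2 h
    rw [ZMod.natCast_eq_zero_iff] at h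
    have := Nat.le_of_dvd h1 h
    omega
  have c1 : (1 : ZMod n) ≠ 0 := by simpa using hc 1 (by norm_num) (by norm_num)
  have c2 : (2 : ZMod n) ≠ 0 := by simpa using hc 2 (by norm_num) (by norm_num)
  have c4 : (4 : ZMod n) ≠ 0 := by simpa using hc 4 (by norm_num) (by norm_num)
  have hSS : ∀ i j, (shiftS n * shiftS n) i j = if j = i + 2 then 1 else 0 := by
    intro i j
    rw [← pow_two, shiftS_pow]; simp
  have hTT : ∀ i j, ((shiftS n).transpose * (shiftS n).transpose) i j = if i = j + 2 then 1 else 0 := by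
    intro i j
    rw [← Matrix.transpose_mul, Matrix.transpose_apply, hSS]
  have hadj : (genPetersen n 2).adjMatrix ℝ = Matrix.fromBlocks (shiftS n + (shiftS n).transpose) 1 1
      (shiftS n * shiftS n + (shiftS n).transpose * (shiftS n).transpose) := by
    ext v w
    rw [SimpleGraph.adjMatrix_apply]
    simp only [genPetersen, SimpleGraph.fromRel_adj]
    rcases v with i | i <;> rcases w with j | j
    · simp only [Matrix.fromBlocks_apply₁₁, Matrix.add_apply, Matrix.transpose_apply, shiftS, Matrix.of_apply,
        gpRel, ne_eq, Sum.inl.injEq]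
      by_cases h1 : j = i + 1
      · have h2 : ¬ i = j + 1 := by
          intro h; apply c2; linear_combination -h - h1
        have h3 : ¬ i = j := by
          intro h; apply c1; linear_combination -h - h1
        rw [if_pos ⟨h3, Or.inl h1⟩, if_pos h1, if_neg h2, add_zero]
      · by_cases h2 : i = j + 1
        · have h3 : ¬ i = j := by
            intro h; apply c1; linear_combination h - h2
          rw [if_pos ⟨h3, Or.inr h2⟩, if_neg h1, if_pos h2, zero_add]
        · rw [if_neg h1, if_neg h2, if_neg (by tauto), zero_add]
    · simp [gpRel, Matrix.one_apply, eq_comm]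
    · simp [gpRel, Matrix.one_apply, eq_comm]
    · simp only [Matrix.fromBlocks_apply₂₂, Matrix.add_apply, hSS, hTT,
        gpRel, ne_eq, Sum.inr.injEq, Nat.cast_ofNat]
      by_cases h1 : j = i + 2
      · have h2 : ¬ i = j + 2 := by
          intro h; apply c4; linear_combination -h - h1
        have h3 : ¬ i = j := by
          intro h; apply c2; linear_combination -h - h1
        rw [if_pos ⟨h3, Or.inl h1⟩, if_pos h1, if_neg h2, add_zero]
      · by_cases h2 : i = j + 2
        · have h3 : ¬ i = j := by
            intro h; apply c2; linear_combination h - h2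
          rw [if_pos ⟨h3, Or.inr h2⟩, if_neg h1, if_pos h2, zero_add]
        · rw [if_neg h1, if_neg h2, if_neg (by tauto), zero_add]
  have hdeg : ∀ v, ((genPetersen n 2).degree v : ℝ) = 3 := by
    intro v
    have h := (genPetersen n 2).adjMatrix_mulVec_const_apply (α := ℝ) (a := 1) (v := v)
    rw [mul_one] at h
    rw [← h, hadj]
    have t1 : ∀ i j, (shiftS n).transpose i j = if j = i - 1 then 1 else 0 := by
      intro i j
      rw [Matrix.transpose_apply, shiftS, Matrix.of_apply]
      simp only [eq_sub_iff_add_eq, eq_comm]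
    have s1 : ∀ i j, shiftS n i j = if j = i + 1 then 1 else 0 := fun i j => rfl
    have t2 : ∀ i j, ((shiftS n).transpose * (shiftS n).transpose) i j = if j = i - 2 then 1 else 0 := by
      intro i j
      rw [hTT]
      simp only [eq_sub_iff_add_eq, eq_comm]
    rcases v with i | i
    · simp only [Matrix.mulVec, dotProduct, Fintype.sum_sum_type, Matrix.fromBlocks_apply₁₁,
        Matrix.fromBlocks_apply₁₂, Matrix.add_apply, t1, s1, Matrix.one_apply, Function.const_apply, mul_one,
        Finset.sum_add_distrib]
      simp; norm_num
    · simp only [Matrix.mulVec, dotProduct, Fintype.sum_sum_type, Matrix.fromBlocks_apply₂₁,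
        Matrix.fromBlocks_apply₂₂, Matrix.add_apply, t2, hSS, Matrix.one_apply, Function.const_apply, mul_one,
        Finset.sum_add_distrib]
      simp; norm_num
  rw [SimpleGraph.lapMatrix, SimpleGraph.degMatrix, hadj]
  simp only [hdeg]
  ext v w
  rcases v with i | i <;> rcases w with j | j <;>
    simp [Matrix.diagonal_apply, Matrix.one_apply] <;> ring

lemma five_tau (n : ℕ) [NeZero n] (hn : 5 ≤ n) :
    5 * (numSpanningTrees (genPetersen n 2) : ℝ) = n * (facN n).det := by
  have hn0 : (n : ℝ) ≠ 0 := Nat.cast_ne_zero.2 (NeZero.ne n)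
  rw [numSpanningTrees_eq_det (genPetersen n 2) (Sum.inl 0)]
  have h := det_lap_add_s12 (genPetersen n 2) (Sum.inl 0) (Sum.elim (fun _ => 1) (fun _ => 0))
  have hsum : ∑ v : ZMod n ⊕ ZMod n, (Sum.elim (fun _ => 1) (fun _ => 0) v : ℝ) = n := by
    simp [Fintype.sum_sum_type, ZMod.card]
  rw [hsum, lap_genPetersen n hn] at h
  have hU : Matrix.vecMulVec (Sum.elim (fun _ => 1) (fun _ => 0) : ZMod n ⊕ ZMod n → ℝ)
      (Sum.elim (fun _ => 1) (fun _ => 0) : ZMod n ⊕ ZMod n → ℝ) = Matrix.fromBlocks (onesJ n) 0 0 0 := by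
    ext v w
    rcases v with i | i <;> rcases w with j | j <;> simp [Matrix.vecMulVec_apply, onesJ]
  rw [hU, Matrix.fromBlocks_add, add_zero, add_zero, det_blocks, big_factor, Matrix.det_mul,
    Matrix.det_mul, det_one_sub_S] at h
  have hT : (1 - (shiftS n).transpose + (1 / (5 * n) : ℝ) • onesJ n).det = 1 / (5 * n) * n ^ 2 := by
    rw [← det_one_sub_S, ← Matrix.det_transpose]
    simp [J_transpose]
  rw [hT] at h
  field_simp at h
  linarith

lemma det_facN_eq (n : ℕ) [NeZero n] (a : ℕ → ℤ)
    (h0 : a 0 = 0) (h1 : a 1 = 1) (h2 : a 2 = 1) (h3 : a 3 = 5)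
    (hrec : ∀ n : ℕ, a (n + 4) = a (n + 3) + 3 * a (n + 2) - a (n + 1) - a n) :
    (facN n).det = 5 * (a n : ℝ) ^ 2 := by
  have hs : (√5 : ℝ) ^ 2 = 5 := Real.sq_sqrt (by norm_num)
  obtain ⟨c, hc⟩ : ∃ c : ℝ, c = (1 + √5) / 2 := ⟨_, rfl⟩
  obtain ⟨d, hd⟩ : ∃ d : ℝ, d = (1 - √5) / 2 := ⟨_, rfl⟩
  have hc2 : c ^ 2 = c + 1 := by rw [hc]; linear_combination hs / 4
  have hd2 : d ^ 2 = d + 1 := by rw [hd]; linear_combination hs / 4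
  have hcd : c * d = -1 := by rw [hc, hd]; linear_combination -hs / 4
  have hcd1 : c + d = 1 := by rw [hc, hd]; ring
  have hex : ∀ t : ℝ, ∃ x : ℝ, 0 < x ∧ x ^ 2 = t * x + 1 := by
    intro t
    have h4 : √(t ^ 2 + 4) ^ 2 = t ^ 2 + 4 := Real.sq_sqrt (by positivity)
    refine ⟨(t + √(t ^ 2 + 4)) / 2, ?_, by linear_combination h4 / 4⟩
    have : |t| < √(t ^ 2 + 4) := by
      rw [← Real.sqrt_sq_eq_abs]
      exact Real.sqrt_lt_sqrt (by positivity) (by linarith)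
    have := neg_abs_le t
    linarith
  obtain ⟨x, hx, hx2⟩ := hex c
  obtain ⟨y, hy, hy2⟩ := hex d
  have hinv : ∀ t z : ℝ, 0 < z → z ^ 2 = t * z + 1 → (-1 / z) ^ 2 = t * (-1 / z) + 1 := by
    intro t z hz h
    field_simp
    linear_combination -h
  have hquart : ∀ t z : ℝ, t ^ 2 = t + 1 → z ^ 2 = t * z + 1 → ∀ k : ℕ,
      z ^ (k + 4) = z ^ (k + 3) + 3 * z ^ (k + 2) - z ^ (k + 1) - z ^ k := by
    intro t z ht hz k
    have : z ^ 4 = z ^ 3 + 3 * z ^ 2 - z - 1 := by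
      linear_combination (z ^ 2 - 1 + t * z - z) * hz + z ^ 2 * ht
    linear_combination z ^ k * this
  set b : ℕ → ℝ := fun k => x ^ k + (-1 / x) ^ k - y ^ k - (-1 / y) ^ k with hb
  have hbrec : ∀ k, b (k + 4) = b (k + 3) + 3 * b (k + 2) - b (k + 1) - b k := by
    intro k
    simp only [hb]
    linear_combination hquart c x hc2 hx2 k + hquart c _ hc2 (hinv c x hx hx2) k
      - hquart d y hd2 hy2 k - hquart d _ hd2 (hinv d y hy hy2) k
  have hx1 : x + -1 / x = c := by field_simp; linear_combination hx2
  have hy1 : y + -1 / y = d := by field_simp; linear_combination hy2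
  have hxm : x * (-1 / x) = -1 := by field_simp
  have hym : y * (-1 / y) = -1 := by field_simp
  have hcds : c - d = √5 := by rw [hc, hd]; ring
  have b0 : b 0 = √5 * (a 0 : ℝ) := by simp [hb, h0]
  have b1 : b 1 = √5 * (a 1 : ℝ) := by
    simp only [hb, h1]; push_cast
    linear_combination hx1 - hy1 + hcds
  have p2 : ∀ X Y t : ℝ, X + Y = t → X * Y = -1 → t ^ 2 = t + 1 → X ^ 2 + Y ^ 2 = t + 3 := by
    intro X Y t h h' h''
    subst h; linear_combination h'' - 2 * h'
  have p3 : ∀ X Y t : ℝ, X + Y = t → X * Y = -1 → t ^ 2 = t + 1 → X ^ 3 + Y ^ 3 = 5 * t + 1 := by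
    intro X Y t h h' h''
    subst h; linear_combination (X + Y + 1) * h'' - 3 * (X + Y) * h'
  have b2 : b 2 = √5 * (a 2 : ℝ) := by
    simp only [hb, h2]; push_cast
    linear_combination p2 _ _ _ hx1 hxm hc2 - p2 _ _ _ hy1 hym hd2 + hcds
  have b3 : b 3 = √5 * (a 3 : ℝ) := by
    simp only [hb, h3]; push_cast
    linear_combination p3 _ _ _ hx1 hxm hc2 - p3 _ _ _ hy1 hym hd2 + 5 * hcds
  have hba : ∀ k, b k = √5 * (a k : ℝ) := by
    intro k
    induction k using Nat.strong_induction_on with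
    | _ k ih =>
      match k, ih with
      | 0, _ => exact b0
      | 1, _ => exact b1
      | 2, _ => exact b2
      | 3, _ => exact b3
      | k + 4, ih =>
        rw [hbrec, hrec, ih (k + 3) (by omega), ih (k + 2) (by omega), ih (k + 1) (by omega),
          ih k (by omega)]
        push_cast
        ring
  have e1 : (x / y + 1 / (x / y)) - (x * y + 1 / (x * y)) = 1 := by
    have : (x + -1 / x) * (y + -1 / y) = -1 := by rw [hx1, hy1, hcd]
    field_simp at this ⊢
    linear_combination -this
  have e2 : (x / y + 1 / (x / y)) * (x * y + 1 / (x * y)) = 7 := by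
    have q1 := p2 _ _ _ hx1 hxm hc2
    have q2 := p2 _ _ _ hy1 hym hd2
    have : (x / y + 1 / (x / y)) * (x * y + 1 / (x * y)) =
        (x ^ 2 + (-1 / x) ^ 2) + (y ^ 2 + (-1 / y) ^ 2) := by field_simp; ring
    rw [this, q1, q2]; linarith
  rw [det_facN n (x / y) (x * y) (by positivity) (by positivity) e1 e2]
  have hfin : ((x / y) ^ n - 1) * ((-(x * y)) ^ n - 1) = (-1) ^ n * x ^ n * b n := by
    have hs1 : ((-1 : ℝ) ^ n) * (-1) ^ n = 1 := by rw [← mul_pow]; simp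
    have hxn : x ^ n ≠ 0 := by positivity
    have hyn : y ^ n ≠ 0 := by positivity
    simp only [hb]
    rw [neg_pow (x * y), mul_pow x y, div_pow, div_pow, div_pow]
    generalize (-1 : ℝ) ^ n = ε at *
    field_simp
    linear_combination (x ^ n - y ^ n) * hs1
  rw [hfin, hba, mul_pow, mul_pow, mul_pow, hs]
  have hs2 : ((-1 : ℝ) ^ n) ^ 2 = 1 := by rw [← pow_mul, mul_comm, pow_mul]; simp
  have hxy : x / y * (x * y) = x ^ 2 := by field_simp
  rw [hs2, hxy, ← pow_mul, ← pow_mul, mul_comm n 2]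
  field_simp

/-- If `a : ℕ → ℤ` satisfies `a(0) = 0`, `a(1) = 1`, `a(2) = 1`,
`a(3) = 5` and `a(n+4) = a(n+3) + 3a(n+2) − a(n+1) − a(n)`, then for every `n ≥ 5`,
`τ(GP(n,2)) = n·a(n)²`. -/
theorem spanning_trees_GP2_recurrence (a : ℕ → ℤ)
    (h0 : a 0 = 0) (h1 : a 1 = 1) (h2 : a 2 = 1) (h3 : a 3 = 5)
    (hrec : ∀ n : ℕ, a (n + 4) = a (n + 3) + 3 * a (n + 2) - a (n + 1) - a n) :
    ∀ n : ℕ, 5 ≤ n →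
      (numSpanningTrees (genPetersen n 2) : ℤ) = n * a n ^ 2 := by
  intro n hn
  have hne : NeZero n := ⟨by omega⟩
  have hn0 : (n : ℝ) ≠ 0 := Nat.cast_ne_zero.2 hne.1
  have h1' := five_tau n hn
  have h2' := det_facN_eq n a h0 h1 h2 h3 hrec
  rw [h2'] at h1'
  have h3' : (numSpanningTrees (genPetersen n 2) : ℝ) = n * (a n : ℝ) ^ 2 := by linarith
  exact_mod_cast h3'
end
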